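/- arXiv:2302.11946 — 2 statements merged into one kernel-verified Lean document; each statement's English description precedes it below -/
import Mathlib

section
/- For each j = 1,…,d, the function q_j(ξ,s) = −∫_{ℝ^d} a(ξ−η) μ(ξ,η,s)(η_j − ξ_j) dη is well defined, belongs to L^∞(𝕋^{d+1}), and satisfies ∫_{𝕋^d} q_j(ξ,s) dξ = 0 for almost every s; consequently the corrector equation ∂_s χ_j − A(s)χ_j = q_j has a time-periodic solution χ_j ∈ L²(𝕋^{d+1}) ∩ H¹((0,1); L²(𝕋^d)), unique under the normalization ∫_{𝕋^{d+1}} χ_j dξ ds = 0. -/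
open MeasureTheory

noncomputable section

/-- The periodicity cell `[0,1)^d`, identified with the torus `𝕋^d`. -/
def cube (d : ℕ) : Set (Fin d → ℝ) := Set.univ.pi fun _ => Set.Ico (0 : ℝ) 1

/-- The operator `A(s)` applied pointwise. -/
def Aop {d : ℕ} (a : (Fin d → ℝ) → ℝ) (μ : (Fin d → ℝ) → (Fin d → ℝ) → ℝ → ℝ)
    (s : ℝ) (v : (Fin d → ℝ) → ℝ) (ξ : Fin d → ℝ) : ℝ :=
  ∫ η, a (ξ - η) * μ ξ η s * (v η - v ξ)

/-- `β` is a time-periodic solution, in `L²(𝕋^{d+1}) ∩ H¹((0,1); L²(𝕋^d))`, of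
`∂_s β - A(s)β = θ` (in the equivalent integrated-in-time formulation). -/
def IsCellSol {d : ℕ} (a : (Fin d → ℝ) → ℝ) (μ : (Fin d → ℝ) → (Fin d → ℝ) → ℝ → ℝ)
    (θ : (Fin d → ℝ) → ℝ → ℝ) (β : (Fin d → ℝ) → ℝ → ℝ) : Prop :=
  Measurable (fun p : (Fin d → ℝ) × ℝ => β p.1 p.2) ∧
  (∀ ξ s, ∀ k : Fin d → ℤ, β (ξ + fun i => (k i : ℝ)) s = β ξ s) ∧
  (∀ ξ s, β ξ (s + 1) = β ξ s) ∧
  IntegrableOn (fun p : (Fin d → ℝ) × ℝ => (β p.1 p.2) ^ 2)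
    (cube d ×ˢ Set.Ioo (0 : ℝ) 1) ∧
  (∀ᵐ ξ ∂(volume : Measure (Fin d → ℝ)), ∀ s ∈ Set.Icc (0 : ℝ) 1,
    β ξ s = β ξ 0 + ∫ τ in (0 : ℝ)..s, (Aop a μ τ (fun η => β η τ) ξ + θ ξ τ))

/-- The right-hand side of the corrector equation:
`q_j(ξ,s) = -∫_{ℝ^d} a(ξ-η) μ(ξ,η,s)(η_j - ξ_j) dη`. -/
def qfun {d : ℕ} (a : (Fin d → ℝ) → ℝ) (μ : (Fin d → ℝ) → (Fin d → ℝ) → ℝ → ℝ)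
    (j : Fin d) (ξ : Fin d → ℝ) (s : ℝ) : ℝ :=
  -∫ η, a (ξ - η) * μ ξ η s * (η j - ξ j)

/-!
Put `l = μ⁺` and write `∂_s χ - A(s)χ = q` as `(l⁻¹ ∂_s + 1) χ = (1 + l⁻¹ A) χ + l⁻¹ q`. Inverting
`l⁻¹ ∂_s + 1` on the time circle gives `χ = κ χ + g`, where `κ` is the Markov kernel on the
space-time torus that runs time back by an exponential waiting time of rate `l` and then performs a
jump with density `l⁻¹ a(ξ - η) μ(ξ, η, s)`, or stays put with the missing probability. Symmetry of
`a` and `μ` makes Lebesgue measure invariant under `κ`. The convolution `a ∗ a` is bounded below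
near `0` (Steinhaus), further convolutions spread this lower bound over a full period, and the
waiting time has a density bounded below, so some power of `κ` dominates a multiple of Lebesgue
measure. This Doeblin condition makes `κⁿ` a strict contraction on functions of mean zero: a
geometric series solves the equation, and the contraction of the `L¹` norm gives uniqueness. The
drift `q` has mean zero because its integrand is antisymmetric in `(ξ, η)`.
-/

open ProbabilityTheory
open scoped NNReal ENNReal Pointwise

section Doeblin

variable {α : Type*} [MeasurableSpace α] {κ : Kernel α α} {m ν : Measure α} {f g : α → ℝ}

/-- Doeblin's condition for a Markov kernel `κ` with respect to an invariant measure `m`: some power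
of `κ` dominates a fixed positive multiple of `m`, uniformly in the starting point. -/
structure IsDoeblin (κ : Kernel α α) (m : Measure α) : Prop where
  invariant : κ.Invariant m
  minorized : ∃ n : ℕ, ∃ δ : ℝ≥0, δ ≠ 0 ∧ ∀ x, δ • m ≤ (κ ^ n) x

/-- The class of bounded measurable functions with zero `m`-mean, on which a minorized kernel
contracts the bound `R`. -/
structure IsCenteredBounded (m : Measure α) (R : ℝ) (f : α → ℝ) : Prop where
  measurable : Measurable f
  abs_le : ∀ x, |f x| ≤ R
  integral_eq_zero : ∫ x, f x ∂m = 0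

lemma IsCenteredBounded.integrable {R : ℝ} (hf : IsCenteredBounded m R f) (ν : Measure α)
    [IsFiniteMeasure ν] : Integrable f ν :=
  Integrable.of_bound hf.measurable.aestronglyMeasurable R (ae_of_all _ hf.abs_le)

lemma isMarkovKernel_pow (κ : Kernel α α) [IsMarkovKernel κ] (n : ℕ) : IsMarkovKernel (κ ^ n) := by
  induction n with
  | zero => exact inferInstanceAs (IsMarkovKernel Kernel.id)
  | succ n ih => exact inferInstanceAs (IsMarkovKernel ((κ ^ n : Kernel α α) ∘ₖ κ))

lemma invariant_pow (hκ : κ.Invariant m) (n : ℕ) : (κ ^ n).Invariant m := by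
  induction n with
  | zero => exact Measure.bind_dirac
  | succ n ih => exact ih.comp hκ

lemma integral_integral_of_invariant (hκ : κ.Invariant m) (hf : Integrable f m) :
    ∫ x, ∫ y, f y ∂κ x ∂m = ∫ x, f x ∂m := by
  have hcomp : (κ ∘ₖ Kernel.const Unit m) () = m := by
    rw [← Measure.comp_eq_comp_const_apply, hκ.def]
  have key := Kernel.integral_comp (κ := Kernel.const Unit m) (η := κ) (a := ()) (f := f)
    (by rwa [hcomp])
  rwa [hcomp, Kernel.const_apply, eq_comm] at key

lemma integrable_integral_abs_of_invariant (hκ : κ.Invariant m) (hf : Integrable f m) :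
    (∀ᵐ x ∂m, Integrable f (κ x)) ∧ Integrable (fun x ↦ ∫ y, |f y| ∂κ x) m :=
  (Measure.integrable_comp_iff (by rw [hκ.def]; exact hf.1)).1 (by rwa [hκ.def])

lemma integral_eq_integral_sub_add [IsFiniteMeasure m] {δ : ℝ≥0} (hν : δ • m ≤ ν)
    (hf : Integrable f ν) (hfm : Integrable f m) :
    ∫ x, f x ∂ν = ∫ x, f x ∂(ν - δ • m) + δ * ∫ x, f x ∂m := by
  conv_lhs => rw [← Measure.sub_add_cancel_of_le hν]
  rw [integral_add_measure (hf.mono_measure Measure.sub_le) hfm.smul_measure_nnreal,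
    integral_smul_nnreal_measure]
  rfl

lemma abs_integral_le_integral_abs_sub [IsFiniteMeasure m] {δ : ℝ≥0} (hν : δ • m ≤ ν)
    (hf : Integrable f ν) (hfm : Integrable f m) (hmean : ∫ x, f x ∂m = 0) :
    |∫ x, f x ∂ν| ≤ ∫ x, |f x| ∂ν - δ * ∫ x, |f x| ∂m := by
  rw [integral_eq_integral_sub_add hν hf hfm, integral_eq_integral_sub_add hν hf.abs hfm.abs, hmean,
    mul_zero, add_zero, add_sub_cancel_right]
  exact abs_integral_le_integral_abs

lemma abs_integral_le_one_sub_mul [IsProbabilityMeasure m] [IsProbabilityMeasure ν] {δ : ℝ≥0}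
    {R : ℝ} (hν : δ • m ≤ ν) (hf : IsCenteredBounded m R f) : |∫ x, f x ∂ν| ≤ (1 - δ) * R := by
  have hmass : (ν - δ • m).real Set.univ = 1 - δ := by
    have := integral_eq_integral_sub_add hν (integrable_const (1 : ℝ)) (integrable_const 1)
    simp only [integral_const, probReal_univ, smul_eq_mul, mul_one] at this
    linarith
  rw [integral_eq_integral_sub_add hν (hf.integrable ν) (hf.integrable m), hf.integral_eq_zero,
    mul_zero, add_zero, mul_comm, ← hmass]
  exact norm_integral_le_of_norm_le_const (f := f) (ae_of_all (ν - δ • m) hf.abs_le)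

lemma minorizing_le_one [IsProbabilityMeasure m] [IsProbabilityMeasure ν] {δ : ℝ≥0}
    (hν : δ • m ≤ ν) : δ ≤ 1 := by
  simpa only [Measure.smul_apply, measure_univ, ENNReal.smul_def, smul_eq_mul, mul_one,
    ENNReal.coe_le_one_iff] using hν Set.univ

lemma IsCenteredBounded.integral_kernel [IsProbabilityMeasure m] [IsMarkovKernel κ] {δ : ℝ≥0}
    {R : ℝ} (hκ : κ.Invariant m) (hδ : ∀ x, δ • m ≤ κ x) (hf : IsCenteredBounded m R f) :
    IsCenteredBounded m ((1 - δ) * R) fun x ↦ ∫ y, f y ∂κ x where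
  measurable := hf.measurable.stronglyMeasurable.integral_kernel.measurable
  abs_le x := abs_integral_le_one_sub_mul (hδ x) hf
  integral_eq_zero := by
    rw [integral_integral_of_invariant hκ (hf.integrable m), hf.integral_eq_zero]

lemma IsCenteredBounded.iterate_integral_kernel [IsProbabilityMeasure m] [IsMarkovKernel κ]
    {δ : ℝ≥0} {R : ℝ} (hκ : κ.Invariant m) (hδ : ∀ x, δ • m ≤ κ x)
    (hf : IsCenteredBounded m R f) (k : ℕ) :
    IsCenteredBounded m ((1 - δ) ^ k * R) ((fun (h : α → ℝ) x ↦ ∫ y, h y ∂κ x)^[k] f) := by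
  induction k with
  | zero => simpa using hf
  | succ k ih =>
    rw [pow_succ', mul_assoc, Function.iterate_succ_apply']
    exact ih.integral_kernel hκ hδ

lemma IsCenteredBounded.integral_tsum {f : ℕ → α → ℝ} {R : ℕ → ℝ}
    (hf : ∀ k, IsCenteredBounded m (R k) (f k)) (hR : Summable R) (ν : Measure α)
    [IsProbabilityMeasure ν] : ∫ x, ∑' k, f k x ∂ν = ∑' k, ∫ x, f k x ∂ν := by
  refine (integral_tsum_of_summable_integral_norm (fun k ↦ (hf k).integrable ν) ?_).symm
  refine hR.of_nonneg_of_le (fun k ↦ integral_nonneg fun x ↦ norm_nonneg _) fun k ↦ ?_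
  simpa using integral_mono ((hf k).integrable ν).norm (integrable_const (R k)) (hf k).abs_le

lemma IsCenteredBounded.tsum [IsProbabilityMeasure m] {f : ℕ → α → ℝ} {R : ℕ → ℝ}
    (hf : ∀ k, IsCenteredBounded m (R k) (f k)) (hR : Summable R) :
    IsCenteredBounded m (∑' k, R k) fun x ↦ ∑' k, f k x where
  measurable := Measurable.tsum fun k ↦ (hf k).measurable
  abs_le x := tsum_of_norm_bounded (f := fun k ↦ f k x) hR.hasSum fun k ↦ (hf k).abs_le x
  integral_eq_zero := by
    simp only [IsCenteredBounded.integral_tsum hf hR, (hf _).integral_eq_zero, tsum_zero]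

lemma exists_eq_add_integral_of_smul_le [IsProbabilityMeasure m] [IsMarkovKernel κ] {δ : ℝ≥0}
    {R : ℝ} (hκ : κ.Invariant m) (hδ₀ : δ ≠ 0) (hδ : ∀ x, δ • m ≤ κ x)
    (hg : IsCenteredBounded m R g) :
    ∃ C f, IsCenteredBounded m C f ∧ ∀ x, f x = g x + ∫ y, f y ∂κ x := by
  set P : (α → ℝ) → α → ℝ := fun h x ↦ ∫ y, h y ∂κ x with hP
  have hiter : ∀ k, IsCenteredBounded m ((1 - δ) ^ k * R) (P^[k] g) :=
    hg.iterate_integral_kernel hκ hδ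
  have hsum : Summable fun k ↦ (1 - δ : ℝ) ^ k * R := by
    obtain ⟨x⟩ : Nonempty α := nonempty_of_isProbabilityMeasure m
    have hδ₁ : (δ : ℝ) ≤ 1 := minorizing_le_one (hδ x)
    have : (0 : ℝ) < δ := NNReal.coe_pos.2 hδ₀.bot_lt
    exact (summable_geometric_of_lt_one (by linarith) (by linarith)).mul_right R
  refine ⟨_, _, IsCenteredBounded.tsum hiter hsum, fun x ↦ ?_⟩
  have hx : Summable fun k ↦ P^[k] g x := hsum.of_norm_bounded fun k ↦ (hiter k).abs_le x
  rw [IsCenteredBounded.integral_tsum hiter hsum, hx.tsum_eq_zero_add]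
  simp only [Function.iterate_succ_apply', Function.iterate_zero, id_eq, hP]

lemma integral_pow_succ [IsMarkovKernel κ] (hf : Measurable f) {R : ℝ} (hR : ∀ x, |f x| ≤ R) (n : ℕ)
    (x : α) : ∫ y, f y ∂(κ ^ (n + 1)) x = ∫ y, ∫ z, f z ∂(κ ^ n) y ∂κ x := by
  have := isMarkovKernel_pow κ n
  exact Kernel.integral_comp (η := κ ^ n) (κ := κ) (a := x)
    (Integrable.of_bound hf.aestronglyMeasurable R (ae_of_all _ hR))

-- A geometric series solves the equation for `κ ^ n`; summing the solution over the first `n`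
-- powers of `κ` solves it for `κ`.
theorem IsDoeblin.exists_eq_add_integral [IsProbabilityMeasure m] [IsMarkovKernel κ] {R : ℝ}
    (hκ : IsDoeblin κ m) (hg : IsCenteredBounded m R g) :
    ∃ C f, IsCenteredBounded m C f ∧ ∀ x, f x = g x + ∫ y, f y ∂κ x := by
  obtain ⟨n, δ, hδ₀, hδ⟩ := hκ.minorized
  have hpow := isMarkovKernel_pow κ
  have hinv := invariant_pow hκ.invariant
  obtain ⟨C, h, hh, h_eq⟩ := exists_eq_add_integral_of_smul_le (hinv n) hδ₀ hδ hg
  have hterm (i : ℕ) : IsCenteredBounded m C fun x ↦ ∫ y, h y ∂(κ ^ i) x := by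
    simpa using hh.integral_kernel (δ := 0) (hinv i) (by simp [Measure.zero_le])
  refine ⟨n * C, fun x ↦ ∑ i ∈ Finset.range n, ∫ y, h y ∂(κ ^ i) x, ⟨?_, fun x ↦ ?_, ?_⟩,
    fun x ↦ ?_⟩
  · exact Finset.measurable_sum _ fun i _ ↦ (hterm i).measurable
  · simpa using (Finset.abs_sum_le_sum_abs _ _).trans
      (Finset.sum_le_card_nsmul (Finset.range n) _ C fun i _ ↦ (hterm i).abs_le x)
  · rw [integral_finsetSum _ fun i _ ↦ (hterm i).integrable m]
    exact Finset.sum_eq_zero fun i _ ↦ (hterm i).integral_eq_zero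
  · have hzero : ∫ y, h y ∂(κ ^ 0) x = h x := integral_dirac' h x hh.measurable.stronglyMeasurable
    have hshift := Finset.sum_range_succ_sub_sum (fun i ↦ ∫ y, h y ∂(κ ^ i) x) (n := n)
    rw [integral_finsetSum _ fun i _ ↦ (hterm i).integrable _]
    simp only [← integral_pow_succ hh.measurable hh.abs_le]
    rw [Finset.sum_range_succ'] at hshift
    linarith [h_eq x]

lemma ae_eq_integral_pow [IsMarkovKernel κ] (hκ : κ.Invariant m)
    (hfm : Measurable f) (hf : Integrable f m) (hfκ : ∀ᵐ x ∂m, f x = ∫ y, f y ∂κ x) (n : ℕ) :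
    ∀ᵐ x ∂m, f x = ∫ y, f y ∂(κ ^ n) x := by
  have := isMarkovKernel_pow κ n
  induction n with
  | zero =>
    exact ae_of_all _ fun x ↦ (integral_dirac' f x hfm.stronglyMeasurable).symm
  | succ n ih =>
    have hint := (integrable_integral_abs_of_invariant (invariant_pow hκ (n + 1)) hf).1
    have ih' : ∀ᵐ x ∂m, ∀ᵐ y ∂κ x, f y = ∫ z, f z ∂(κ ^ n) y :=
      Measure.ae_ae_of_ae_comp (by rw [hκ.def]; exact ih (isMarkovKernel_pow κ n))
    filter_upwards [hint, ih', hfκ] with x hx ihx hfx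
    rw [hfx, integral_congr_ae ihx]
    exact (Kernel.integral_comp (η := κ ^ n) (κ := κ) (a := x) hx).symm

theorem IsDoeblin.ae_eq_zero [IsProbabilityMeasure m] [IsMarkovKernel κ] (hκ : IsDoeblin κ m)
    (hfm : Measurable f) (hf : Integrable f m) (hmean : ∫ x, f x ∂m = 0)
    (hfκ : ∀ᵐ x ∂m, f x = ∫ y, f y ∂κ x) :
    f =ᵐ[m] 0 := by
  obtain ⟨n, δ, hδ₀, hδ⟩ := hκ.minorized
  have hinv := invariant_pow hκ.invariant n
  have := isMarkovKernel_pow κ n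
  have habs : 0 ≤ fun x ↦ |f x| := fun x ↦ abs_nonneg (f x)
  obtain ⟨hint, hint_abs⟩ := integrable_integral_abs_of_invariant hinv hf
  have hbound : ∀ᵐ x ∂m, |f x| ≤ ∫ y, |f y| ∂(κ ^ n) x - δ * ∫ y, |f y| ∂m := by
    filter_upwards [ae_eq_integral_pow hκ.invariant hfm hf hfκ n, hint] with x hx hfx
    rw [hx]
    exact abs_integral_le_integral_abs_sub (hδ x) hfx hf hmean
  have hle : ∫ x, |f x| ∂m ≤ ∫ x, |f x| ∂m - δ * ∫ x, |f x| ∂m := by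
    refine (integral_mono_ae hf.abs (hint_abs.sub (integrable_const _)) hbound).trans_eq ?_
    rw [integral_sub' hint_abs (integrable_const _), integral_integral_of_invariant hinv hf.abs]
    simp
  have hzero : ∫ x, |f x| ∂m = 0 := by
    have hδ_pos : (0 : ℝ) < δ := NNReal.coe_pos.2 hδ₀.bot_lt
    nlinarith [integral_nonneg (μ := m) habs]
  filter_upwards [(integral_eq_zero_iff_of_nonneg habs hf.abs).1 hzero] with x hx
  exact abs_eq_zero.1 hx

end Doeblin

section TimeResolvent

variable {l : ℝ} {h y : ℝ → ℝ} {s τ : ℝ}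

/-- The `1`-periodic Green's function of `l⁻¹ ∂_s + 1`, a probability density on each period. -/
def periodicGreen (l t : ℝ) : ℝ := l / (Real.exp l - 1) * Real.exp (l * (1 - Int.fract t))

lemma periodicGreen_periodic (l : ℝ) : Function.Periodic (periodicGreen l) 1 := fun t ↦ by
  simp only [periodicGreen, Int.fract_add_one]

@[fun_prop]
lemma measurable_periodicGreen (l : ℝ) : Measurable (periodicGreen l) := by
  unfold periodicGreen
  fun_prop

lemma div_exp_sub_one_pos (hl : 0 < l) : 0 < l / (Real.exp l - 1) :=
  div_pos hl (sub_pos.2 (Real.one_lt_exp_iff.2 hl))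

lemma le_periodicGreen (hl : 0 < l) (t : ℝ) : l / (Real.exp l - 1) ≤ periodicGreen l t :=
  le_mul_of_one_le_right (div_exp_sub_one_pos hl).le
    (Real.one_le_exp (mul_nonneg hl.le (sub_nonneg.2 (Int.fract_lt_one t).le)))

lemma periodicGreen_nonneg (hl : 0 < l) (t : ℝ) : 0 ≤ periodicGreen l t :=
  (div_exp_sub_one_pos hl).le.trans (le_periodicGreen hl t)

lemma periodicGreen_le (hl : 0 < l) (t : ℝ) :
    periodicGreen l t ≤ l / (Real.exp l - 1) * Real.exp l := by
  refine mul_le_mul_of_nonneg_left (Real.exp_le_exp.2 ?_) (div_exp_sub_one_pos hl).le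
  nlinarith [Int.fract_nonneg t]

lemma periodicGreen_sub (hl : 0 < l) (hs : s ∈ Set.Icc (0 : ℝ) 1) (hτ : τ ∈ Set.Ioo (0 : ℝ) 1) :
    periodicGreen l (s - τ) = Real.exp (-l * s) * (l / (Real.exp l - 1) * Real.exp (l * τ) +
      (Set.Iic s).indicator (fun τ ↦ l * Real.exp (l * τ)) τ) := by
  have hexp : Real.exp l - 1 ≠ 0 := (sub_pos.2 (Real.one_lt_exp_iff.2 hl)).ne'
  by_cases hτs : τ ≤ s
  · have hfract : Int.fract (s - τ) = s - τ :=
      Int.fract_eq_self.2 ⟨sub_nonneg.2 hτs, by linarith [hs.2, hτ.1]⟩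
    have : Real.exp (l * (1 - (s - τ))) = Real.exp l * Real.exp (-l * s) * Real.exp (l * τ) := by
      rw [← Real.exp_add, ← Real.exp_add]; ring_nf
    rw [Set.indicator_of_mem (Set.mem_Iic.2 hτs), periodicGreen, hfract, this]
    field_simp
    ring
  · have hfract : Int.fract (s - τ) = s - τ + 1 := by
      rw [← Int.fract_add_one, Int.fract_eq_self]
      constructor <;> linarith [hs.1, hτ.2]
    have : Real.exp (l * (1 - (s - τ + 1))) = Real.exp (-l * s) * Real.exp (l * τ) := by
      rw [← Real.exp_add]; ring_nf
    rw [Set.indicator_of_notMem (by simpa using hτs), periodicGreen, hfract, this]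
    ring

lemma intervalIntegral_periodicGreen (hl : 0 < l) (t : ℝ) :
    ∫ τ in t..(t + 1), periodicGreen l τ = 1 := by
  have hexp : Real.exp l - 1 ≠ 0 := (sub_pos.2 (Real.one_lt_exp_iff.2 hl)).ne'
  have hcongr : ∫ τ in (0 : ℝ)..1, periodicGreen l τ =
      ∫ τ in (0 : ℝ)..1, l / (Real.exp l - 1) * Real.exp (l - l * τ) := by
    refine intervalIntegral.integral_congr_Ioo_of_le zero_le_one fun τ hτ ↦ ?_
    rw [periodicGreen, Int.fract_eq_self.2 ⟨hτ.1.le, hτ.2⟩, mul_sub, mul_one]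
  rw [(periodicGreen_periodic l).intervalIntegral_add_eq t 0, zero_add, hcongr,
    intervalIntegral.integral_const_mul, intervalIntegral.integral_comp_sub_mul Real.exp hl.ne',
    integral_exp]
  simp only [mul_one, mul_zero, sub_zero, sub_self, Real.exp_zero, smul_eq_mul]
  field_simp

lemma lintegral_periodicGreen_period (hl : 0 < l) (t : ℝ) :
    ∫⁻ τ in Set.Ioo t (t + 1), ENNReal.ofReal (periodicGreen l τ) = 1 := by
  have hint : IntegrableOn (periodicGreen l) (Set.Ioo t (t + 1)) :=
    Integrable.of_bound (measurable_periodicGreen l).aestronglyMeasurable _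
      (ae_of_all _ fun τ ↦ (Real.norm_of_nonneg (periodicGreen_nonneg hl τ)).le.trans
        (periodicGreen_le hl τ))
  rw [← ofReal_integral_eq_lintegral_ofReal hint (ae_of_all _ (periodicGreen_nonneg hl)),
    ← integral_Ioc_eq_integral_Ioo, ← intervalIntegral.integral_of_le (by linarith),
    intervalIntegral_periodicGreen hl, ENNReal.ofReal_one]

lemma lintegral_periodicGreen_sub_left (hl : 0 < l) (s : ℝ) :
    ∫⁻ τ in Set.Ioo (0 : ℝ) 1, ENNReal.ofReal (periodicGreen l (s - τ)) = 1 := by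
  rw [← lintegral_periodicGreen_period hl (s - 1),
    ← (Measure.measurePreserving_sub_left volume s).setLIntegral_comp_preimage
      measurableSet_Ioo (by fun_prop)]
  simp

lemma lintegral_periodicGreen_sub_right (hl : 0 < l) (τ : ℝ) :
    ∫⁻ s in Set.Ioo (0 : ℝ) 1, ENNReal.ofReal (periodicGreen l (s - τ)) = 1 := by
  rw [← lintegral_periodicGreen_period hl (-τ), ← (measurePreserving_sub_right volume τ
    ).setLIntegral_comp_preimage measurableSet_Ioo (f := fun t ↦ ENNReal.ofReal (periodicGreen l t))
    (by fun_prop)]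
  simp

/-- Integrating factor, for an absolutely continuous `y` with derivative `k`. -/
lemma exp_mul_eq_add_intervalIntegral {c S : ℝ} {k : ℝ → ℝ} (hS : 0 ≤ S)
    (hk : IntervalIntegrable k volume 0 S)
    (hy : ∀ s ∈ Set.Icc 0 S, y s = y 0 + ∫ τ in 0..s, k τ) :
    Real.exp (c * S) * y S = y 0 + ∫ τ in 0..S, Real.exp (c * τ) * (c * y τ + k τ) := by
  have hexp (x : ℝ) : HasDerivAt (fun τ ↦ Real.exp (c * τ)) (c * Real.exp (c * x)) x := by
    simpa [mul_comm] using ((hasDerivAt_id x).const_mul c).exp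
  have hac_exp : AbsolutelyContinuousOnInterval (fun τ ↦ Real.exp (c * τ)) 0 S :=
    ContDiffOn.absolutelyContinuousOnInterval (by fun_prop)
  have hac : AbsolutelyContinuousOnInterval (fun s ↦ y 0 + ∫ τ in 0..s, k τ) 0 S :=
    (contDiffOn_const (c := y 0)).absolutelyContinuousOnInterval.fun_add
      (hk.absolutelyContinuousOnInterval_intervalIntegral Set.left_mem_uIcc)
  have hcongr : ∫ τ in 0..S, Real.exp (c * τ) * (c * y τ + k τ) =
      ∫ τ in 0..S, deriv (fun τ ↦ Real.exp (c * τ)) τ * (y 0 + ∫ σ in 0..τ, k σ) +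
        Real.exp (c * τ) * deriv (fun s ↦ y 0 + ∫ σ in 0..s, k σ) τ := by
    refine intervalIntegral.integral_congr_ae ?_
    filter_upwards [hk.ae_hasDerivAt_integral] with τ hτ hτS
    have hmem : τ ∈ Set.uIcc 0 S := Set.uIoc_subset_uIcc hτS
    rw [(hexp τ).deriv, ((hτ hmem 0 Set.left_mem_uIcc).const_add (y 0)).deriv,
      ← hy τ (by rwa [Set.uIcc_of_le hS] at hmem)]
    ring
  rw [hcongr, hac_exp.integral_deriv_mul_eq_sub hac, ← hy S (Set.right_mem_Icc.2 hS)]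
  simp

/-- The response to the forcing `h` of the relaxation equation `y' = l (h - y)` on the circle. -/
def periodicResponse (l : ℝ) (h : ℝ → ℝ) (s : ℝ) : ℝ :=
  ∫ τ in Set.Ioo (0 : ℝ) 1, periodicGreen l (s - τ) * h τ

lemma intervalIntegrable_of_integrableOn_Ioo (hh : IntegrableOn h (Set.Ioo 0 1))
    (hs : s ∈ Set.Icc (0 : ℝ) 1) : IntervalIntegrable h volume 0 s :=
  (intervalIntegrable_iff_integrableOn_Ioo_of_le hs.1).2
    (hh.mono_set (Set.Ioo_subset_Ioo_right hs.2))

lemma periodicResponse_eq (hl : 0 < l) (hh : IntegrableOn h (Set.Ioo 0 1))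
    (hs : s ∈ Set.Icc (0 : ℝ) 1) :
    periodicResponse l h s = Real.exp (-l * s) *
      ((∫ τ in (0 : ℝ)..1, Real.exp (l * τ) * (l * h τ)) / (Real.exp l - 1) +
        ∫ τ in 0..s, Real.exp (l * τ) * (l * h τ)) := by
  have hweighted : IntegrableOn (fun τ ↦ Real.exp (l * τ) * (l * h τ)) (Set.Ioo 0 1) := by
    refine (intervalIntegrable_iff_integrableOn_Ioo_of_le zero_le_one).1 ?_
    exact ((intervalIntegrable_of_integrableOn_Ioo hh ⟨zero_le_one, le_rfl⟩).const_mul l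
      ).continuousOn_mul (by fun_prop)
  have hcongr : periodicResponse l h s = ∫ τ in Set.Ioo (0 : ℝ) 1, Real.exp (-l * s) *
      ((Real.exp l - 1)⁻¹ * (Real.exp (l * τ) * (l * h τ)) +
        (Set.Iic s).indicator (fun τ ↦ Real.exp (l * τ) * (l * h τ)) τ) := by
    refine setIntegral_congr_fun measurableSet_Ioo fun τ hτ ↦ ?_
    by_cases hτs : τ ∈ Set.Iic s <;> simp only [periodicGreen_sub hl hs hτ, hτs,
      Set.indicator_of_mem, Set.indicator_of_notMem, not_false_eq_true] <;> ring
  have hinter : (Set.Ioo 0 1 ∩ Set.Iic s : Set ℝ) =ᵐ[volume] Set.Ioc 0 s := by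
    simpa only [Set.Ioc_inter_Iic, min_eq_right hs.2] using
      (Ioo_ae_eq_Ioc (a := (0 : ℝ)) (b := 1)).inter (ae_eq_refl (Set.Iic s))
  rw [hcongr, integral_const_mul, integral_add (hweighted.const_mul _)
    (hweighted.indicator measurableSet_Iic), integral_const_mul,
    setIntegral_indicator measurableSet_Iic, setIntegral_congr_set hinter,
    ← intervalIntegral.integral_of_le hs.1, ← integral_Ioc_eq_integral_Ioo,
    ← intervalIntegral.integral_of_le zero_le_one, inv_mul_eq_div]

lemma periodicResponse_eq_add (hl : 0 < l) (hh : IntegrableOn h (Set.Ioo 0 1))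
    (hs : s ∈ Set.Icc (0 : ℝ) 1) :
    periodicResponse l h s =
      periodicResponse l h 0 + ∫ τ in 0..s, l * (h τ - periodicResponse l h τ) := by
  set w : ℝ → ℝ := fun s ↦ (∫ τ in (0 : ℝ)..1, Real.exp (l * τ) * (l * h τ)) / (Real.exp l - 1) +
    ∫ τ in 0..s, Real.exp (l * τ) * (l * h τ) with hw
  have hresponse {t : ℝ} (ht : t ∈ Set.Icc (0 : ℝ) 1) : periodicResponse l h t =
      Real.exp (-l * t) * w t := periodicResponse_eq hl hh ht
  have hk : IntervalIntegrable (fun τ ↦ Real.exp (l * τ) * (l * h τ)) volume 0 s :=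
    ((intervalIntegrable_of_integrableOn_Ioo hh hs).const_mul l).continuousOn_mul (by fun_prop)
  rw [hresponse hs, exp_mul_eq_add_intervalIntegral hs.1 hk fun t _ ↦ by simp [hw],
    hresponse ⟨le_rfl, zero_le_one⟩, mul_zero, Real.exp_zero, one_mul]
  congr 1
  refine intervalIntegral.integral_congr fun τ hτ ↦ ?_
  rw [Set.uIcc_of_le hs.1] at hτ
  have hcancel : Real.exp (-l * τ) * Real.exp (l * τ) = 1 := by rw [← Real.exp_add]; simp
  simp only [hresponse ⟨hτ.1, hτ.2.trans hs.2⟩]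
  linear_combination (l * h τ) * hcancel

lemma eq_periodicResponse (hl : 0 < l) (hh : IntegrableOn h (Set.Ioo 0 1))
    (hy_int : IntegrableOn y (Set.Ioo 0 1)) (hper : y 1 = y 0)
    (hy : ∀ s ∈ Set.Icc (0 : ℝ) 1, y s = y 0 + ∫ τ in 0..s, l * (h τ - y τ))
    (hs : s ∈ Set.Icc (0 : ℝ) 1) : y s = periodicResponse l h s := by
  have hduhamel {t : ℝ} (ht : t ∈ Set.Icc (0 : ℝ) 1) :
      Real.exp (l * t) * y t = y 0 + ∫ τ in 0..t, Real.exp (l * τ) * (l * h τ) := by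
    rw [exp_mul_eq_add_intervalIntegral (k := fun τ ↦ l * (h τ - y τ)) ht.1
      ((intervalIntegrable_of_integrableOn_Ioo (hh.sub hy_int) ht).const_mul l)
      fun t' ht' ↦ hy t' ⟨ht'.1, ht'.2.trans ht.2⟩]
    simp only [← mul_add, add_sub_cancel]
  have hy₀ : (∫ τ in (0 : ℝ)..1, Real.exp (l * τ) * (l * h τ)) / (Real.exp l - 1) = y 0 := by
    have h1 := hduhamel ⟨zero_le_one, le_rfl⟩
    rw [hper, mul_one] at h1
    rw [div_eq_iff (sub_pos.2 (Real.one_lt_exp_iff.2 hl)).ne']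
    linarith
  rw [periodicResponse_eq hl hh hs, hy₀, ← hduhamel hs, ← mul_assoc, ← Real.exp_add]
  simp

/-- The law of `s - T` modulo `1`, represented in `(0, 1)`, for an exponential time `T` of
rate `l`. -/
def timeKernel (l : ℝ) : Kernel ℝ ℝ :=
  (Kernel.const ℝ (volume.restrict (Set.Ioo 0 1))).withDensity
    fun s τ ↦ ENNReal.ofReal (periodicGreen l (s - τ))

lemma timeKernel_apply (l s : ℝ) : timeKernel l s = (volume.restrict (Set.Ioo 0 1)).withDensity
    fun τ ↦ ENNReal.ofReal (periodicGreen l (s - τ)) := by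
  rw [timeKernel, Kernel.withDensity_apply _ (by fun_prop), Kernel.const_apply]

lemma isMarkovKernel_timeKernel (hl : 0 < l) : IsMarkovKernel (timeKernel l) :=
  ⟨fun s ↦ ⟨by rw [timeKernel_apply, withDensity_apply _ MeasurableSet.univ, Measure.restrict_univ,
    lintegral_periodicGreen_sub_left hl]⟩⟩

lemma timeKernel_periodic (l : ℝ) : Function.Periodic (timeKernel l) 1 := fun s ↦ by
  simp only [timeKernel_apply, add_sub_right_comm, (periodicGreen_periodic l) _]

lemma integral_timeKernel (hl : 0 < l) (h : ℝ → ℝ) (s : ℝ) :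
    ∫ τ, h τ ∂timeKernel l s = periodicResponse l h s := by
  rw [timeKernel_apply, integral_withDensity_eq_integral_toReal_smul (by fun_prop) (by simp)]
  simp only [ENNReal.toReal_ofReal (periodicGreen_nonneg hl _), smul_eq_mul, periodicResponse]

lemma invariant_timeKernel (hl : 0 < l) :
    (timeKernel l).Invariant (volume.restrict (Set.Ioo 0 1)) := by
  refine Measure.ext_of_lintegral _ fun f hf ↦ ?_
  rw [Measure.lintegral_bind (by fun_prop) (by fun_prop)]
  have hswap (s : ℝ) : ∫⁻ τ, f τ ∂timeKernel l s =
      ∫⁻ τ in Set.Ioo 0 1, ENNReal.ofReal (periodicGreen l (s - τ)) * f τ := by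
    rw [timeKernel_apply, lintegral_withDensity_eq_lintegral_mul _ (by fun_prop) hf]
    rfl
  simp only [hswap]
  rw [lintegral_lintegral_swap (by fun_prop)]
  refine lintegral_congr fun τ ↦ ?_
  rw [lintegral_mul_const _ (by fun_prop), lintegral_periodicGreen_sub_right hl, one_mul]

lemma smul_le_timeKernel (hl : 0 < l) (s : ℝ) :
    ENNReal.ofReal (l / (Real.exp l - 1)) • volume.restrict (Set.Ioo 0 1) ≤ timeKernel l s := by
  rw [timeKernel_apply, ← withDensity_const]
  exact withDensity_mono (ae_of_all _ fun τ ↦ ENNReal.ofReal_le_ofReal (le_periodicGreen hl _))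

lemma timeKernel_le_smul (hl : 0 < l) (s : ℝ) : timeKernel l s ≤
    ENNReal.ofReal (l / (Real.exp l - 1) * Real.exp l) • volume.restrict (Set.Ioo 0 1) := by
  rw [timeKernel_apply, ← withDensity_const]
  exact withDensity_mono (ae_of_all _ fun τ ↦ ENNReal.ofReal_le_ofReal (periodicGreen_le hl _))

lemma periodicResponse_add (hl : 0 < l) (hh : IntegrableOn h (Set.Ioo 0 1))
    (hy : IntegrableOn y (Set.Ioo 0 1)) (s : ℝ) :
    periodicResponse l (fun τ ↦ h τ + y τ) s = periodicResponse l h s + periodicResponse l y s := by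
  have hint {k : ℝ → ℝ} (hk : IntegrableOn k (Set.Ioo 0 1) volume) :
      Integrable k (timeKernel l s) :=
    Integrable.of_measure_le_smul ENNReal.ofReal_ne_top (timeKernel_le_smul hl s) hk
  simp only [← integral_timeKernel hl]
  exact integral_add (hint hh) (hint hy)

end TimeResolvent

section Convolution

variable {E : Type*} [MeasurableSpace E]

lemma measure_le_of_lintegral_le {ν ρ : Measure E}
    (h : ∀ F : E → ℝ≥0∞, Measurable F → ∫⁻ x, F x ∂ν ≤ ∫⁻ x, F x ∂ρ) : ν ≤ ρ :=
  Measure.le_intro fun A hA _ ↦ by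
    simpa only [lintegral_indicator_one hA] using h (A.indicator 1) (measurable_one.indicator hA)

lemma conv_le_conv [AddMonoid E] [MeasurableAdd₂ E] {ν₁ ν₂ ρ₁ ρ₂ : Measure E} [SFinite ρ₂]
    (hν : ν₁ ≤ ν₂) (hρ : ρ₁ ≤ ρ₂) : ν₁ ∗ ρ₁ ≤ ν₂ ∗ ρ₂ :=
  Measure.map_mono (Measure.prod_mono hν hρ) measurable_add

lemma isNegInvariant_withDensity [InvolutiveNeg E] [MeasurableNeg E] {vol : Measure E}
    [vol.IsNegInvariant] {f : E → ℝ≥0∞} (hf : ∀ x, f (-x) = f x) :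
    (vol.withDensity f).IsNegInvariant := ⟨Measure.ext fun A hA ↦ by
  rw [Measure.neg_apply, withDensity_apply _ hA.neg, withDensity_apply _ hA, ← Set.neg_preimage,
    ← (Measure.measurePreserving_neg vol).setLIntegral_comp_preimage_emb
      (MeasurableEquiv.neg E).measurableEmbedding f A]
  simp only [hf]⟩

lemma smul_restrict_le_conv_restrict [AddCommGroup E] [MeasurableAdd₂ E] [MeasurableNeg E]
    {vol : Measure E} [SFinite vol] [vol.IsAddLeftInvariant] {S T U : Set E} {c : ℝ≥0∞}
    (hT : MeasurableSet T) (hU : MeasurableSet U) (h : ∀ x ∈ U, c ≤ vol (S ∩ (x - ·) ⁻¹' T)) :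
    c • vol.restrict U ≤ vol.restrict S ∗ vol.restrict T := by
  refine measure_le_of_lintegral_le fun F hF ↦ ?_
  have : Measurable (T.indicator 1 : E → ℝ≥0∞) := measurable_one.indicator hT
  have hoverlap (x : E) :
      vol (S ∩ (x - ·) ⁻¹' T) * F x = ∫⁻ y in S, T.indicator 1 (x - y) * F x ∂vol := by
    rw [lintegral_mul_const _ (by fun_prop), Set.inter_comm,
      ← Measure.restrict_apply (measurable_const_sub x hT),
      ← lintegral_indicator_one (measurable_const_sub x hT)]
    rfl
  calc ∫⁻ x, F x ∂(c • vol.restrict U) = ∫⁻ x in U, c * F x ∂vol := by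
        rw [lintegral_smul_measure, smul_eq_mul, lintegral_const_mul _ hF]
    _ ≤ ∫⁻ x in U, vol (S ∩ (x - ·) ⁻¹' T) * F x ∂vol :=
        setLIntegral_mono' hU fun x hx ↦ mul_le_mul_left (h x hx) _
    _ ≤ ∫⁻ x, vol (S ∩ (x - ·) ⁻¹' T) * F x ∂vol := setLIntegral_le_lintegral _ _
    _ = ∫⁻ y in S, ∫⁻ x, T.indicator 1 (x - y) * F x ∂vol ∂vol := by
        simp only [hoverlap]
        exact lintegral_lintegral_swap (by fun_prop)
    _ = ∫⁻ y in S, ∫⁻ z in T, F (y + z) ∂vol ∂vol := by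
        refine lintegral_congr fun y ↦ ?_
        rw [← lintegral_add_left_eq_self _ y, ← lintegral_indicator hT]
        refine lintegral_congr fun z ↦ ?_
        by_cases hz : z ∈ T <;> simp [hz]
    _ = ∫⁻ x, F x ∂(vol.restrict S ∗ vol.restrict T) := (Measure.lintegral_conv hF).symm

lemma exists_isCompact_smul_restrict_le_withDensity [TopologicalSpace E] [T2Space E] [BorelSpace E]
    {vol : Measure E} [vol.InnerRegular] {f : E → ℝ≥0∞}
    (hf : Measurable f) (hf₀ : ∫⁻ x, f x ∂vol ≠ 0) :
    ∃ K, IsCompact K ∧ vol K ≠ 0 ∧ ∃ c : ℝ≥0∞, c ≠ 0 ∧ c • vol.restrict K ≤ vol.withDensity f := by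
  have hsupport : vol (⋃ n : ℕ, {x | (n : ℝ≥0∞)⁻¹ < f x}) ≠ 0 := by
    refine fun hnull ↦ hf₀ ((lintegral_eq_zero_iff hf).2 ?_)
    refine measure_mono_null (fun x hx ↦ ?_) hnull
    exact Set.mem_iUnion.2 (ENNReal.exists_inv_nat_lt hx)
  obtain ⟨n, hn⟩ := exists_measure_pos_of_not_measure_iUnion_null hsupport
  obtain ⟨K, hKf, hK, hK₀⟩ := (measurableSet_lt measurable_const hf).exists_lt_isCompact hn
  refine ⟨K, hK, hK₀.ne', (n : ℝ≥0∞)⁻¹, ENNReal.inv_ne_zero.2 (ENNReal.natCast_ne_top n), ?_⟩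
  rw [← withDensity_const, ← withDensity_indicator hK.measurableSet]
  exact withDensity_mono (ae_of_all _ (Set.indicator_le fun x hx ↦ (hKf hx).le))

variable [NormedAddCommGroup E] [NormedSpace ℝ E] [FiniteDimensional ℝ E] [BorelSpace E]
  {vol : Measure E} [vol.IsAddHaarMeasure]

-- Steinhaus: `K` meets its translate by `x` in at least half of its volume when `x` is small.
lemma exists_smul_restrict_ball_le_conv_self {ν : Measure E} [SFinite ν] [ν.IsNegInvariant]
    {K : Set E} (hK : IsCompact K) (hK₀ : vol K ≠ 0) {c : ℝ≥0∞} (hc : c ≠ 0)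
    (hν : c • vol.restrict K ≤ ν) :
    ∃ r > 0, ∃ c : ℝ≥0∞, c ≠ 0 ∧ c • vol.restrict (Metric.ball 0 r) ≤ ν ∗ ν := by
  have hνneg : c • vol.restrict (-K) ≤ ν := by
    rw [← Measure.map_neg_eq_self ν, ← Measure.map_neg_eq_self vol]
    refine le_trans (le_of_eq ?_) (Measure.map_mono hν measurable_neg)
    rw [Measure.restrict_map measurable_neg hK.neg.measurableSet, Set.neg_preimage, neg_neg,
      Measure.map_smul]
  obtain ⟨r, hr, hball⟩ := Metric.eventually_nhds_iff_ball.1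
    (eventually_nhds_zero_measure_vadd_sdiff_lt (μ := vol) hK hK.isClosed
      (ENNReal.half_pos hK₀).ne')
  refine ⟨r, hr, c * c * (vol K / 2), by simp [hc, hK₀], ?_⟩
  have hoverlap : (vol K / 2) • vol.restrict (Metric.ball 0 r) ≤
      vol.restrict K ∗ vol.restrict (-K) := by
    refine smul_restrict_le_conv_restrict hK.neg.measurableSet measurableSet_ball fun x hx ↦ ?_
    have hpreimage : (x - ·) ⁻¹' (-K) = x +ᵥ K := by
      ext y
      simp [Set.mem_vadd_set_iff_neg_vadd_mem, neg_add_eq_sub]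
    have hsplit : vol K ≤ vol (K ∩ (x +ᵥ K)) + vol K / 2 :=
      calc vol K = vol ((x +ᵥ K) ∩ K) + vol ((x +ᵥ K) \ K) := by
            rw [measure_inter_add_sdiff _ hK.measurableSet, measure_vadd]
        _ ≤ vol (K ∩ (x +ᵥ K)) + vol K / 2 := by
            rw [Set.inter_comm]
            gcongr
            exact (hball x hx).le
    rw [hpreimage]
    have hfinite : vol K / 2 ≠ ∞ := ENNReal.div_ne_top hK.measure_ne_top two_ne_zero
    rwa [← ENNReal.add_le_add_iff_right hfinite, ENNReal.add_halves]
  calc (c * c * (vol K / 2)) • vol.restrict (Metric.ball 0 r)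
      ≤ (c * c) • (vol.restrict K ∗ vol.restrict (-K)) := by
        rw [mul_smul]
        gcongr
    _ = (c • vol.restrict K) ∗ (c • vol.restrict (-K)) := by
        rw [Measure.conv_smul_left, Measure.conv_smul_right, mul_smul]
    _ ≤ ν ∗ ν := conv_le_conv hν hνneg

lemma smul_restrict_ball_le_conv_restrict_ball (r : ℝ) :
    vol (Metric.ball 0 (r / 4)) • vol.restrict (Metric.ball 0 (3 / 2 * r)) ≤
      vol.restrict (Metric.ball 0 r) ∗ vol.restrict (Metric.ball 0 r) := by
  refine smul_restrict_le_conv_restrict measurableSet_ball measurableSet_ball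
    fun x hx ↦ ?_
  rw [← Measure.addHaar_ball_center vol ((2 : ℝ)⁻¹ • x)]
  refine measure_mono fun y hy ↦ ?_
  have hhalf : ‖(2 : ℝ)⁻¹ • x‖ < 3 / 4 * r := by
    rw [norm_smul, Real.norm_of_nonneg (by norm_num)]
    linarith [mem_ball_zero_iff.1 hx]
  have hy' := mem_ball_iff_norm.1 hy
  constructor
  · rw [mem_ball_zero_iff]
    calc ‖y‖ = ‖(2 : ℝ)⁻¹ • x + (y - (2 : ℝ)⁻¹ • x)‖ := by rw [add_sub_cancel]
      _ < r := by linarith [norm_add_le ((2 : ℝ)⁻¹ • x) (y - (2 : ℝ)⁻¹ • x)]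
  · have hsplit : x - y = (2 : ℝ)⁻¹ • x - (y - (2 : ℝ)⁻¹ • x) := by module
    rw [Set.mem_preimage, hsplit, mem_ball_zero_iff]
    linarith [norm_sub_le ((2 : ℝ)⁻¹ • x) (y - (2 : ℝ)⁻¹ • x)]

end Convolution

section Torus

variable {d : ℕ} {Y : Type*}

lemma measurableSet_cube (d : ℕ) : MeasurableSet (cube d) :=
  MeasurableSet.univ_pi fun _ ↦ measurableSet_Ico

lemma volume_cube (d : ℕ) : volume (cube d) = 1 := by
  simp [cube, volume_pi_pi]

/-- Periodicity with respect to the lattice `ℤ^d`, with values in an arbitrary type, so that it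
applies to predicates as well as to functions. -/
def IsLatticePeriodic (g : (Fin d → ℝ) → Y) : Prop :=
  ∀ ξ, ∀ k : Fin d → ℤ, g (ξ + fun i ↦ (k i : ℝ)) = g ξ

/-- The representative in `cube d` of a point modulo `ℤ^d`. -/
def wrap (ξ : Fin d → ℝ) : Fin d → ℝ := fun i ↦ Int.fract (ξ i)

@[fun_prop]
lemma measurable_wrap : Measurable (wrap (d := d)) :=
  measurable_pi_lambda _ fun i ↦ measurable_fract.comp (measurable_pi_apply i)

lemma isLatticePeriodic_wrap : IsLatticePeriodic (wrap (d := d)) := fun ξ k ↦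
  funext fun i ↦ Int.fract_add_intCast (ξ i) (k i)

lemma wrap_of_mem_cube {ξ : Fin d → ℝ} (hξ : ξ ∈ cube d) : wrap ξ = ξ :=
  funext fun i ↦ Int.fract_eq_self.2 (hξ i (Set.mem_univ i))

lemma IsLatticePeriodic.comp_add_right {g : (Fin d → ℝ) → Y} (hg : IsLatticePeriodic g)
    (z : Fin d → ℝ) : IsLatticePeriodic fun ξ ↦ g (ξ + z) := fun ξ k ↦ by
  simp only [add_right_comm ξ, hg (ξ + z) k]

lemma IsLatticePeriodic.apply_wrap {g : (Fin d → ℝ) → Y} (hg : IsLatticePeriodic g)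
    (ξ : Fin d → ℝ) : g (wrap ξ) = g ξ := by
  rw [← hg (wrap ξ) fun i ↦ ⌊ξ i⌋]
  exact congrArg g (funext fun i ↦ Int.fract_add_floor (ξ i))

lemma wrap_wrap_add (ξ z : Fin d → ℝ) : wrap (wrap ξ + z) = wrap (ξ + z) :=
  (isLatticePeriodic_wrap.comp_add_right z).apply_wrap ξ

lemma isAddFundamentalDomain_cube (d : ℕ) :
    IsAddFundamentalDomain (Submodule.span ℤ (Set.range (Pi.basisFun ℝ (Fin d)))).toAddSubgroup
      (cube d) volume := by
  have hdomain := ZSpan.isAddFundamentalDomain' (Pi.basisFun ℝ (Fin d)) volume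
  rwa [ZSpan.fundamentalDomain_pi_basisFun] at hdomain

instance (d : ℕ) :
    Countable (Submodule.span ℤ (Set.range (Pi.basisFun ℝ (Fin d)))).toAddSubgroup :=
  inferInstanceAs (Countable (Submodule.span ℤ (Set.range (Pi.basisFun ℝ (Fin d)))))

lemma IsLatticePeriodic.apply_vadd {g : (Fin d → ℝ) → Y} (hg : IsLatticePeriodic g)
    (k : (Submodule.span ℤ (Set.range (Pi.basisFun ℝ (Fin d)))).toAddSubgroup) (ξ : Fin d → ℝ) :
    g (k +ᵥ ξ) = g ξ := by
  choose n hn using ((Pi.basisFun ℝ (Fin d)).mem_span_iff_repr_mem ℤ _).1 k.2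
  have hk : k +ᵥ ξ = ξ + fun i ↦ (n i : ℝ) := by
    rw [AddSubgroup.vadd_def, vadd_eq_add, add_comm]
    exact congrArg _ (funext fun i ↦ (hn i).symm)
  rw [hk, hg]

lemma IsLatticePeriodic.setLIntegral_add_right {g : (Fin d → ℝ) → ℝ≥0∞} (hg : IsLatticePeriodic g)
    (z : Fin d → ℝ) : ∫⁻ ξ in cube d, g (ξ + z) = ∫⁻ ξ in cube d, g ξ := by
  have hpreimage : (· + z) ⁻¹' (z +ᵥ cube d) = cube d := by
    ext ξ
    simp [Set.mem_vadd_set_iff_neg_vadd_mem, add_comm]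
  calc ∫⁻ ξ in cube d, g (ξ + z) = ∫⁻ ξ in z +ᵥ cube d, g ξ := by
        rw [← (measurePreserving_add_right volume z).setLIntegral_comp_preimage_emb
          (MeasurableEquiv.addRight z).measurableEmbedding g (z +ᵥ cube d), hpreimage]
    _ = ∫⁻ ξ in cube d, g ξ :=
        ((isAddFundamentalDomain_cube d).vadd_of_comm z).setLIntegral_eq
          (isAddFundamentalDomain_cube d) g hg.apply_vadd

-- Substituting `η = ξ + z` and translating the cell by `z` turns `G ξ (ξ + z)` into `G (ξ - z) ξ`.
lemma setLIntegral_lintegral_swap_of_periodic {G : (Fin d → ℝ) → (Fin d → ℝ) → ℝ≥0∞}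
    (hG : Measurable (Function.uncurry G))
    (hper : ∀ ξ η, ∀ k : Fin d → ℤ, G (ξ + fun i ↦ (k i : ℝ)) (η + fun i ↦ (k i : ℝ)) = G ξ η) :
    ∫⁻ ξ in cube d, ∫⁻ η, G ξ η = ∫⁻ ξ in cube d, ∫⁻ η, G η ξ := by
  have hdiag (z : Fin d → ℝ) : IsLatticePeriodic fun ξ ↦ G (ξ - z) ξ := fun ξ k ↦ by
    simpa only [add_sub_right_comm] using hper (ξ - z) ξ k
  calc ∫⁻ ξ in cube d, ∫⁻ η, G ξ η = ∫⁻ ξ in cube d, ∫⁻ z, G ξ (ξ + z) :=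
        lintegral_congr fun ξ ↦ (lintegral_add_left_eq_self _ ξ).symm
    _ = ∫⁻ z, ∫⁻ ξ in cube d, G ξ (ξ + z) := lintegral_lintegral_swap (by fun_prop)
    _ = ∫⁻ z, ∫⁻ ξ in cube d, G (ξ - z) ξ := lintegral_congr fun z ↦ by
        simpa only [add_sub_cancel_right] using (hdiag z).setLIntegral_add_right z
    _ = ∫⁻ ξ in cube d, ∫⁻ z, G (ξ - z) ξ := lintegral_lintegral_swap (by fun_prop)
    _ = ∫⁻ ξ in cube d, ∫⁻ η, G η ξ :=
        lintegral_congr fun ξ ↦ lintegral_sub_left_eq_self (fun η ↦ G η ξ) ξ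

lemma setIntegral_integral_eq_zero_of_antisymm {G : (Fin d → ℝ) → (Fin d → ℝ) → ℝ}
    (hmeas : Measurable (Function.uncurry G))
    (hint : Integrable (Function.uncurry G) ((volume.restrict (cube d)).prod volume))
    (hper : ∀ ξ η, ∀ k : Fin d → ℤ, G (ξ + fun i ↦ (k i : ℝ)) (η + fun i ↦ (k i : ℝ)) = G ξ η)
    (hanti : ∀ ξ η, G η ξ = -G ξ η) : ∫ ξ in cube d, ∫ η, G ξ η = 0 := by
  have hswap : ∫⁻ ξ in cube d, ∫⁻ η, ENNReal.ofReal (G ξ η) =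
      ∫⁻ ξ in cube d, ∫⁻ η, ENNReal.ofReal (-G ξ η) := by
    simpa only [← hanti] using setLIntegral_lintegral_swap_of_periodic
      (G := fun ξ η ↦ ENNReal.ofReal (G ξ η)) hmeas.ennreal_ofReal fun ξ η k ↦ by rw [hper]
  have hprod : ∫ ξ in cube d, ∫ η, G ξ η =
      ∫ x, Function.uncurry G x ∂(volume.restrict (cube d)).prod volume :=
    (integral_prod _ hint).symm
  rw [hprod, integral_eq_lintegral_pos_part_sub_lintegral_neg_part hint,
    lintegral_prod _ (by fun_prop), lintegral_prod _ (by fun_prop), sub_eq_zero]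
  exact congrArg ENNReal.toReal hswap

/-- Lebesgue measure on the space-time cell, a model of the Haar measure of `𝕋^{d+1}`. -/
def cellMeasure (d : ℕ) : Measure ((Fin d → ℝ) × ℝ) := volume.restrict (cube d ×ˢ Set.Ioo 0 1)

lemma cellMeasure_eq_prod (d : ℕ) : cellMeasure d =
    (volume.restrict (cube d)).prod (volume.restrict (Set.Ioo 0 1)) := by
  rw [cellMeasure, Measure.volume_eq_prod, Measure.prod_restrict]

instance (d : ℕ) : IsProbabilityMeasure (cellMeasure d) :=
  ⟨by simp [cellMeasure, Measure.volume_eq_prod, volume_cube]⟩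

end Torus

section Spreading

variable {d : ℕ} {κ η : Kernel ((Fin d → ℝ) × ℝ) ((Fin d → ℝ) × ℝ)}
  {ν ρ : Measure (Fin d → ℝ)}

/-- One step of `κ` from `x` dominates a displacement of the space component by `ν` (modulo the
lattice) together with a uniform choice of the time component. -/
def SpreadsAlong (κ : Kernel ((Fin d → ℝ) × ℝ) ((Fin d → ℝ) × ℝ)) (ν : Measure (Fin d → ℝ)) :
    Prop :=
  ∀ F : (Fin d → ℝ) × ℝ → ℝ≥0∞, Measurable F → ∀ x : (Fin d → ℝ) × ℝ,
    ∫⁻ z, (∫⁻ τ in Set.Ioo 0 1, F (wrap (x.1 + z), τ)) ∂ν ≤ ∫⁻ y, F y ∂κ x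

lemma SpreadsAlong.mono (hκ : SpreadsAlong κ ν) (hρ : ρ ≤ ν) : SpreadsAlong κ ρ := fun F hF x ↦
  (lintegral_mono' hρ le_rfl).trans (hκ F hF x)

lemma SpreadsAlong.comp [SFinite ρ] (hη : SpreadsAlong η ρ) (hκ : SpreadsAlong κ ν) :
    SpreadsAlong (η ∘ₖ κ) (ν ∗ ρ) := fun F hF x ↦
  calc ∫⁻ z, (∫⁻ τ in Set.Ioo 0 1, F (wrap (x.1 + z), τ)) ∂(ν ∗ ρ)
    _ = ∫⁻ z, (∫⁻ z', (∫⁻ τ in Set.Ioo 0 1, F (wrap (x.1 + (z + z')), τ)) ∂ρ) ∂ν :=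
        Measure.lintegral_conv (by fun_prop)
    _ = ∫⁻ z, (∫⁻ _ in Set.Ioo (0 : ℝ) 1,
          ∫⁻ z', (∫⁻ τ in Set.Ioo 0 1, F (wrap (wrap (x.1 + z) + z'), τ)) ∂ρ) ∂ν := by
        simp [wrap_wrap_add, add_assoc]
    _ ≤ ∫⁻ z, (∫⁻ σ in Set.Ioo (0 : ℝ) 1, ∫⁻ y, F y ∂η (wrap (x.1 + z), σ)) ∂ν :=
        lintegral_mono fun z ↦ lintegral_mono fun σ ↦ hη F hF (wrap (x.1 + z), σ)
    _ ≤ ∫⁻ y, ∫⁻ y', F y' ∂η y ∂κ x := hκ (fun y ↦ ∫⁻ y', F y' ∂η y) hF.lintegral_kernel x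
    _ = ∫⁻ y, F y ∂(η ∘ₖ κ) x := (Kernel.lintegral_comp η κ x hF).symm

lemma SpreadsAlong.pow_add [SFinite ρ] {m n : ℕ} (hm : SpreadsAlong (κ ^ m) ρ)
    (hn : SpreadsAlong (κ ^ n) ν) : SpreadsAlong (κ ^ (m + n)) (ν ∗ ρ) :=
  Kernel.pow_add κ m n ▸ hm.comp hn

lemma SpreadsAlong.exists_pow_ball {n : ℕ} {r : ℝ} {c : ℝ≥0∞} (hr : 0 < r) (hc : c ≠ 0)
    (hκ : SpreadsAlong (κ ^ n) (c • volume.restrict (Metric.ball 0 r))) (k : ℕ) :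
    ∃ n, ∃ c : ℝ≥0∞, c ≠ 0 ∧
      SpreadsAlong (κ ^ n) (c • volume.restrict (Metric.ball 0 ((3 / 2) ^ k * r))) := by
  induction k with
  | zero => exact ⟨n, c, hc, by rwa [pow_zero, one_mul]⟩
  | succ k ih =>
    obtain ⟨n, c, hc, hκ⟩ := ih
    set R := (3 / 2) ^ k * r with hR
    have : 0 < R := by positivity
    refine ⟨n + n, c * c * volume (Metric.ball (0 : Fin d → ℝ) (R / 4)), ?_,
      (hκ.pow_add hκ).mono ?_⟩
    · exact mul_ne_zero (mul_ne_zero hc hc) (Metric.measure_ball_pos _ _ (by positivity)).ne'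
    · rw [Measure.conv_smul_left, Measure.conv_smul_right, pow_succ', mul_assoc _ _ r, ← hR,
        mul_smul, mul_smul]
      gcongr
      exact smul_restrict_ball_le_conv_restrict_ball R

lemma cube_subset_ball (d : ℕ) : cube d ⊆ Metric.ball 0 1 := fun ξ hξ ↦ by
  rw [mem_ball_zero_iff, pi_norm_lt_iff one_pos]
  exact fun i ↦ abs_lt.2 ⟨by linarith [(hξ i trivial).1], (hξ i trivial).2⟩

lemma SpreadsAlong.smul_cellMeasure_le {c : ℝ≥0∞}
    (hκ : SpreadsAlong κ (c • volume.restrict (cube d))) (x : (Fin d → ℝ) × ℝ) :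
    c • cellMeasure d ≤ κ x := by
  refine measure_le_of_lintegral_le fun F hF ↦ le_trans (le_of_eq ?_) (hκ F hF x)
  have hper : IsLatticePeriodic fun ξ ↦ ∫⁻ τ in Set.Ioo 0 1, F (wrap ξ, τ) := fun ξ k ↦ by
    simp only [isLatticePeriodic_wrap ξ k]
  rw [lintegral_smul_measure, lintegral_smul_measure, cellMeasure_eq_prod,
    lintegral_prod _ hF.aemeasurable]
  simp only [add_comm x.1, hper.setLIntegral_add_right x.1]
  congr 1
  exact setLIntegral_congr_fun (measurableSet_cube d) fun ξ hξ ↦ by rw [wrap_of_mem_cube hξ]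

theorem SpreadsAlong.exists_smul_cellMeasure_le_pow {f : (Fin d → ℝ) → ℝ≥0∞} (hf : Measurable f)
    (hneg : ∀ z, f (-z) = f z) (hf₀ : ∫⁻ z, f z ≠ 0)
    (hκ : SpreadsAlong κ (volume.withDensity f)) :
    ∃ n : ℕ, ∃ δ : ℝ≥0, δ ≠ 0 ∧ ∀ x, δ • cellMeasure d ≤ (κ ^ n) x := by
  have : (volume.withDensity f).IsNegInvariant := isNegInvariant_withDensity hneg
  obtain ⟨K, hK, hK₀, c, hc, hcf⟩ := exists_isCompact_smul_restrict_le_withDensity hf hf₀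
  obtain ⟨r, hr, c, hc, hball⟩ := exists_smul_restrict_ball_le_conv_self hK hK₀ hc hcf
  rw [← pow_one κ] at hκ
  obtain ⟨k, hk⟩ := pow_unbounded_of_one_lt r⁻¹ (by norm_num : (1 : ℝ) < 3 / 2)
  obtain ⟨n, c, hc, hcube⟩ := ((hκ.pow_add hκ).mono hball).exists_pow_ball hr hc k
  have hsubset : cube d ⊆ Metric.ball 0 ((3 / 2) ^ k * r) :=
    (cube_subset_ball d).trans (Metric.ball_subset_ball ((inv_le_iff_one_le_mul₀ hr).1 hk.le))
  refine ⟨n, (min c 1).toNNReal, (ENNReal.toNNReal_pos (by simp [hc]) (by simp)).ne', fun x ↦ ?_⟩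
  have hmin : min c 1 • cellMeasure d ≤ (κ ^ n) x := by
    refine (hcube.mono ?_).smul_cellMeasure_le x
    gcongr
    exact min_le_left c 1
  rwa [← ENNReal.coe_toNNReal (a := min c 1) (by simp)] at hmin

end Spreading

section CellKernel

/-- The jump density `a` of the nonlocal operator: an even probability density. -/
structure IsJumpDensity {d : ℕ} (a : (Fin d → ℝ) → ℝ) : Prop where
  measurable : Measurable a
  nonneg : ∀ z, 0 ≤ a z
  integral_eq_one : ∫ z, a z = 1
  even : ∀ z, a (-z) = a z

/-- The coefficient `μ` of the nonlocal operator: symmetric, lattice-periodic in space, and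
uniformly elliptic with bounds `μm` and `μp`. -/
structure IsCoefficient {d : ℕ} (μ : (Fin d → ℝ) → (Fin d → ℝ) → ℝ → ℝ) (μm μp : ℝ) : Prop where
  measurable : Measurable fun p : (Fin d → ℝ) × (Fin d → ℝ) × ℝ ↦ μ p.1 p.2.1 p.2.2
  latticePeriodic : ∀ η s, IsLatticePeriodic fun ξ ↦ μ ξ η s
  symm : ∀ ξ η s, μ ξ η s = μ η ξ s
  lower_pos : 0 < μm
  lower_le : ∀ ξ η s, μm ≤ μ ξ η s
  le_upper : ∀ ξ η s, μ ξ η s ≤ μp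

variable {d : ℕ} {a : (Fin d → ℝ) → ℝ} {μ : (Fin d → ℝ) → (Fin d → ℝ) → ℝ → ℝ} {μm μp l : ℝ}

lemma IsJumpDensity.integrable (ha : IsJumpDensity a) : Integrable a :=
  of_not_not fun h ↦ one_ne_zero (ha.integral_eq_one.symm.trans (integral_undef h))

lemma IsJumpDensity.lintegral_eq_one (ha : IsJumpDensity a) :
    ∫⁻ z, ENNReal.ofReal (a z) = 1 := by
  rw [← ofReal_integral_eq_lintegral_ofReal ha.integrable (ae_of_all _ ha.nonneg),
    ha.integral_eq_one, ENNReal.ofReal_one]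

lemma IsCoefficient.pos (hμ : IsCoefficient μ μm μp) (ξ η : Fin d → ℝ) (s : ℝ) : 0 < μ ξ η s :=
  hμ.lower_pos.trans_le (hμ.lower_le ξ η s)

lemma IsCoefficient.upper_pos (hμ : IsCoefficient μ μm μp) : 0 < μp :=
  (hμ.pos 0 0 0).trans_le (hμ.le_upper 0 0 0)

lemma IsCoefficient.add_add (hμ : IsCoefficient μ μm μp) (ξ η : Fin d → ℝ) (s : ℝ)
    (k : Fin d → ℤ) : μ (ξ + fun i ↦ (k i : ℝ)) (η + fun i ↦ (k i : ℝ)) s = μ ξ η s := by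
  have hperiodic (ξ η : Fin d → ℝ) : μ (ξ + fun i ↦ (k i : ℝ)) η s = μ ξ η s :=
    hμ.latticePeriodic η s ξ k
  rw [hperiodic, hμ.symm, hperiodic, hμ.symm]

lemma measurable_jumpRate (ha : IsJumpDensity a) (hμ : IsCoefficient μ μm μp) :
    Measurable fun p : ((Fin d → ℝ) × ℝ) × (Fin d → ℝ) ↦ a (p.1.1 - p.2) * μ p.1.1 p.2 p.1.2 :=
  (ha.measurable.comp (by fun_prop : Measurable fun p : ((Fin d → ℝ) × ℝ) × (Fin d → ℝ) ↦
    p.1.1 - p.2)).mul (hμ.measurable.comp (by fun_prop :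
      Measurable fun p : ((Fin d → ℝ) × ℝ) × (Fin d → ℝ) ↦ (p.1.1, p.2, p.1.2)))

/-- The density at `η` of the jumps from `ξ` at time `s`, measured in units of the rate `l`. -/
def jumpDensity (a : (Fin d → ℝ) → ℝ) (μ : (Fin d → ℝ) → (Fin d → ℝ) → ℝ → ℝ) (l s : ℝ)
    (ξ η : Fin d → ℝ) : ℝ≥0 :=
  (a (ξ - η) * μ ξ η s / l).toNNReal

lemma measurable_jumpDensity (ha : IsJumpDensity a) (hμ : IsCoefficient μ μm μp) (l : ℝ) :
    Measurable fun p : ((Fin d → ℝ) × ℝ) × (Fin d → ℝ) ↦ jumpDensity a μ l p.1.2 p.1.1 p.2 :=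
  ((measurable_jumpRate ha hμ).div_const l).real_toNNReal

lemma measurable_jumpDensity_right (ha : IsJumpDensity a) (hμ : IsCoefficient μ μm μp) (l s : ℝ)
    (ξ : Fin d → ℝ) : Measurable (jumpDensity a μ l s ξ) :=
  (measurable_jumpDensity ha hμ l).comp (measurable_prodMk_left (x := (ξ, s)))

lemma jumpDensity_symm (ha : IsJumpDensity a) (hμ : IsCoefficient μ μm μp) (l s : ℝ)
    (ξ η : Fin d → ℝ) : jumpDensity a μ l s ξ η = jumpDensity a μ l s η ξ := by
  rw [jumpDensity, jumpDensity, ← ha.even, neg_sub, hμ.symm]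

lemma jumpDensity_add_add (hμ : IsCoefficient μ μm μp) (l s : ℝ) (ξ η : Fin d → ℝ)
    (k : Fin d → ℤ) :
    jumpDensity a μ l s (ξ + fun i ↦ (k i : ℝ)) (η + fun i ↦ (k i : ℝ)) =
      jumpDensity a μ l s ξ η := by
  rw [jumpDensity, add_sub_add_right_eq_sub, hμ.add_add, jumpDensity]

lemma coe_jumpDensity (ha : IsJumpDensity a) (hμ : IsCoefficient μ μm μp) (hl : 0 < l) (s : ℝ)
    (ξ η : Fin d → ℝ) : (jumpDensity a μ l s ξ η : ℝ) = a (ξ - η) * μ ξ η s / l :=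
  Real.coe_toNNReal _ (by have := ha.nonneg (ξ - η); have := hμ.pos ξ η s; positivity)

lemma ofReal_mul_le_jumpDensity (ha : IsJumpDensity a) (hμ : IsCoefficient μ μm μp) (hl : 0 < l)
    (s : ℝ) (ξ η : Fin d → ℝ) :
    ENNReal.ofReal (μm / l * a (ξ - η)) ≤ jumpDensity a μ l s ξ η := by
  refine ENNReal.ofReal_le_ofReal ?_
  rw [div_mul_eq_mul_div, mul_comm μm]
  gcongr
  exacts [ha.nonneg _, hμ.lower_le ξ η s]

lemma lintegral_jumpDensity_le_one (ha : IsJumpDensity a) (hμ : IsCoefficient μ μm μp) (s : ℝ)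
    (ξ : Fin d → ℝ) : ∫⁻ η, jumpDensity a μ μp s ξ η ≤ 1 :=
  calc ∫⁻ η, jumpDensity a μ μp s ξ η ≤ ∫⁻ η, ENNReal.ofReal (a (ξ - η)) := by
        refine lintegral_mono fun η ↦ ENNReal.ofReal_le_ofReal ?_
        rw [mul_div_assoc]
        exact mul_le_of_le_one_right (ha.nonneg _)
          ((div_le_one hμ.upper_pos).2 (hμ.le_upper ξ η s))
    _ = 1 := by
        rw [lintegral_sub_left_eq_self (fun η ↦ ENNReal.ofReal (a η)) ξ, ha.lintegral_eq_one]

/-- The law of the position after a jump from `ξ` at time `s`; a sub-Markov kernel when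
`μ ≤ l`. -/
def jumpKernel (a : (Fin d → ℝ) → ℝ) (μ : (Fin d → ℝ) → (Fin d → ℝ) → ℝ → ℝ) (l : ℝ) :
    Kernel ((Fin d → ℝ) × ℝ) (Fin d → ℝ) :=
  (Kernel.const _ volume).withDensity fun x η ↦ jumpDensity a μ l x.2 x.1 η

lemma jumpKernel_apply (ha : IsJumpDensity a) (hμ : IsCoefficient μ μm μp)
    (x : (Fin d → ℝ) × ℝ) : jumpKernel a μ l x =
      volume.withDensity fun η ↦ (jumpDensity a μ l x.2 x.1 η : ℝ≥0∞) := by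
  rw [jumpKernel, Kernel.withDensity_apply _ (measurable_jumpDensity ha hμ l).coe_nnreal_ennreal,
    Kernel.const_apply]

/-- The law of the position after a jump from `ξ` at time `s`, where with the missing mass of
`jumpKernel` no jump takes place. -/
def lazyJumpKernel (a : (Fin d → ℝ) → ℝ) (μ : (Fin d → ℝ) → (Fin d → ℝ) → ℝ → ℝ) (l : ℝ) :
    Kernel ((Fin d → ℝ) × ℝ) (Fin d → ℝ) :=
  jumpKernel a μ l + (Kernel.deterministic Prod.fst measurable_fst).withDensity
    fun x _ ↦ 1 - jumpKernel a μ l x Set.univ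

lemma lazyJumpKernel_apply (a : (Fin d → ℝ) → ℝ) (μ : (Fin d → ℝ) → (Fin d → ℝ) → ℝ → ℝ) (l : ℝ)
    (x : (Fin d → ℝ) × ℝ) : lazyJumpKernel a μ l x =
      jumpKernel a μ l x + (1 - jumpKernel a μ l x Set.univ) • Measure.dirac x.1 := by
  have hmeas : Measurable fun p : ((Fin d → ℝ) × ℝ) × (Fin d → ℝ) ↦
      1 - jumpKernel a μ l p.1 Set.univ :=
    measurable_const.sub (((jumpKernel a μ l).measurable_coe .univ).comp measurable_fst)
  rw [lazyJumpKernel, add_apply, Kernel.withDensity_apply _ hmeas, withDensity_const,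
    Kernel.deterministic_apply]

lemma jumpKernel_univ_le_one (ha : IsJumpDensity a) (hμ : IsCoefficient μ μm μp)
    (x : (Fin d → ℝ) × ℝ) : jumpKernel a μ μp x Set.univ ≤ 1 := by
  rw [jumpKernel_apply ha hμ, withDensity_apply _ .univ, Measure.restrict_univ]
  exact lintegral_jumpDensity_le_one ha hμ x.2 x.1

lemma isMarkovKernel_lazyJumpKernel (ha : IsJumpDensity a) (hμ : IsCoefficient μ μm μp) :
    IsMarkovKernel (lazyJumpKernel a μ μp) :=
  ⟨fun x ↦ ⟨by
    rw [lazyJumpKernel_apply, Measure.add_apply, Measure.smul_apply, Measure.dirac_apply' _ .univ,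
      Set.indicator_univ, Pi.one_apply, smul_eq_mul, mul_one,
      add_tsub_cancel_of_le (jumpKernel_univ_le_one ha hμ x)]⟩⟩

lemma lintegral_lazyJumpKernel (ha : IsJumpDensity a) (hμ : IsCoefficient μ μm μp)
    {F : (Fin d → ℝ) → ℝ≥0∞} (hF : Measurable F) (x : (Fin d → ℝ) × ℝ) :
    ∫⁻ η, F η ∂lazyJumpKernel a μ μp x = (∫⁻ η, jumpDensity a μ μp x.2 x.1 η * F η) +
      (1 - ∫⁻ η, jumpDensity a μ μp x.2 x.1 η) * F x.1 := by
  have hmeas := (measurable_jumpDensity_right ha hμ μp x.2 x.1).coe_nnreal_ennreal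
  rw [lazyJumpKernel_apply, lintegral_add_measure, lintegral_smul_measure, lintegral_dirac' _ hF,
    jumpKernel_apply ha hμ, lintegral_withDensity_eq_lintegral_mul _ hmeas hF,
    withDensity_apply _ .univ, Measure.restrict_univ]
  rfl

lemma integral_lazyJumpKernel (ha : IsJumpDensity a) (hμ : IsCoefficient μ μm μp)
    {x : (Fin d → ℝ) × ℝ} {F : (Fin d → ℝ) → ℝ} (hFmeas : Measurable F)
    (hF : Integrable F (lazyJumpKernel a μ μp x)) :
    ∫ η, F η ∂lazyJumpKernel a μ μp x = F x.1 + Aop a μ x.2 F x.1 / μp := by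
  have := isMarkovKernel_lazyJumpKernel ha hμ
  have hdiff : Integrable (fun η ↦ F η - F x.1) (lazyJumpKernel a μ μp x) :=
    hF.sub (integrable_const _)
  have hjump : ∫ η, (F η - F x.1) ∂jumpKernel a μ μp x = Aop a μ x.2 F x.1 / μp := by
    rw [jumpKernel_apply ha hμ, integral_withDensity_eq_integral_smul
      (measurable_jumpDensity_right ha hμ μp x.2 x.1), Aop, ← integral_div]
    refine integral_congr_ae (ae_of_all _ fun η ↦ ?_)
    simp only [NNReal.smul_def, coe_jumpDensity ha hμ hμ.upper_pos, smul_eq_mul,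
      mul_div_right_comm]
  calc ∫ η, F η ∂lazyJumpKernel a μ μp x
      = F x.1 + ∫ η, (F η - F x.1) ∂lazyJumpKernel a μ μp x := by
        rw [integral_sub hF (integrable_const _)]
        simp
    _ = F x.1 + ∫ η, (F η - F x.1) ∂jumpKernel a μ μp x := by
        rw [lazyJumpKernel_apply] at hdiff ⊢
        rw [integral_add_measure (integrable_add_measure.1 hdiff).1
          (integrable_add_measure.1 hdiff).2, integral_smul_measure,
          integral_dirac' _ _ (by fun_prop)]
        simp
    _ = F x.1 + Aop a μ x.2 F x.1 / μp := by rw [hjump]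

/-- The lazy jump as a transition of the space-time cell: positions are reduced modulo `ℤ^d` and
the time component is unchanged. -/
def spaceKernel (a : (Fin d → ℝ) → ℝ) (μ : (Fin d → ℝ) → (Fin d → ℝ) → ℝ → ℝ) (l : ℝ) :
    Kernel ((Fin d → ℝ) × ℝ) ((Fin d → ℝ) × ℝ) :=
  (lazyJumpKernel a μ l ×ₖ Kernel.deterministic Prod.snd measurable_snd).map (Prod.map wrap id)

lemma spaceKernel_apply (ha : IsJumpDensity a) (hμ : IsCoefficient μ μm μp)
    (x : (Fin d → ℝ) × ℝ) :
    spaceKernel a μ μp x = (lazyJumpKernel a μ μp x).map fun η ↦ (wrap η, x.2) := by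
  have := isMarkovKernel_lazyJumpKernel ha hμ
  rw [spaceKernel, Kernel.map_apply _ (by fun_prop), Kernel.prod_apply, Kernel.deterministic_apply,
    Measure.prod_dirac, Measure.map_map (by fun_prop) (by fun_prop)]
  rfl

lemma isMarkovKernel_spaceKernel (ha : IsJumpDensity a) (hμ : IsCoefficient μ μm μp) :
    IsMarkovKernel (spaceKernel a μ μp) := by
  have := isMarkovKernel_lazyJumpKernel ha hμ
  exact Kernel.IsMarkovKernel.map _ (by fun_prop)

lemma lintegral_spaceKernel (ha : IsJumpDensity a) (hμ : IsCoefficient μ μm μp)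
    {F : (Fin d → ℝ) × ℝ → ℝ≥0∞} (hF : Measurable F) (x : (Fin d → ℝ) × ℝ) :
    ∫⁻ y, F y ∂spaceKernel a μ μp x =
      (∫⁻ η, jumpDensity a μ μp x.2 x.1 η * F (wrap η, x.2)) +
        (1 - ∫⁻ η, jumpDensity a μ μp x.2 x.1 η) * F (wrap x.1, x.2) := by
  rw [spaceKernel_apply ha hμ, lintegral_map hF (by fun_prop),
    lintegral_lazyJumpKernel ha hμ (by fun_prop)]

lemma spaceKernel_latticePeriodic (ha : IsJumpDensity a) (hμ : IsCoefficient μ μm μp) (s : ℝ) :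
    IsLatticePeriodic fun ξ ↦ spaceKernel a μ μp (ξ, s) := fun ξ k ↦ by
  have hshift (G : (Fin d → ℝ) → ℝ≥0∞) (hG : IsLatticePeriodic G) :
      ∫⁻ η, jumpDensity a μ μp s (ξ + fun i ↦ (k i : ℝ)) η * G η =
        ∫⁻ η, jumpDensity a μ μp s ξ η * G η := by
    rw [← lintegral_add_right_eq_self _ (fun i ↦ (k i : ℝ))]
    simp only [jumpDensity_add_add hμ, hG _ k]
  refine Measure.ext_of_lintegral _ fun F hF ↦ ?_
  have hone := hshift 1 fun _ _ ↦ rfl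
  simp only [Pi.one_apply, mul_one] at hone
  simp only [lintegral_spaceKernel ha hμ hF, hone, isLatticePeriodic_wrap ξ k,
    hshift (fun η ↦ F (wrap η, s)) fun η k ↦ by simp only [isLatticePeriodic_wrap η k]]

lemma integral_spaceKernel (ha : IsJumpDensity a) (hμ : IsCoefficient μ μm μp)
    {F : (Fin d → ℝ) × ℝ → ℝ} (hFmeas : Measurable F) {x : (Fin d → ℝ) × ℝ}
    (hFper : IsLatticePeriodic fun ξ ↦ F (ξ, x.2)) (hF : Integrable F (spaceKernel a μ μp x)) :
    ∫ y, F y ∂spaceKernel a μ μp x = F x + Aop a μ x.2 (fun η ↦ F (η, x.2)) x.1 / μp := by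
  rw [spaceKernel_apply ha hμ] at hF ⊢
  have hFwrap := (integrable_map_measure hF.1 (by fun_prop)).1 hF
  rw [integral_map (by fun_prop) hF.1]
  simp only [Function.comp_def, hFper.apply_wrap] at hFwrap ⊢
  exact integral_lazyJumpKernel ha hμ (by fun_prop) hFwrap

-- The wrapped positions form a periodic function, so mass transport trades the mass jumping into
-- `ξ` for the mass jumping out of `ξ`.
lemma invariant_spaceKernel (ha : IsJumpDensity a) (hμ : IsCoefficient μ μm μp) :
    (spaceKernel a μ μp).Invariant (cellMeasure d) := by
  have := isMarkovKernel_spaceKernel ha hμ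
  refine Measure.ext_of_lintegral _ fun F hF ↦ ?_
  rw [Measure.lintegral_bind (by fun_prop) (by fun_prop), cellMeasure_eq_prod,
    lintegral_prod_symm _ (by fun_prop), lintegral_prod_symm _ (by fun_prop)]
  refine lintegral_congr fun s ↦ ?_
  have hJ : Measurable fun p : (Fin d → ℝ) × (Fin d → ℝ) ↦
      (jumpDensity a μ μp s p.1 p.2 : ℝ≥0∞) :=
    ((measurable_jumpDensity ha hμ μp).comp (f := fun p : (Fin d → ℝ) × (Fin d → ℝ) ↦
      ((p.1, s), p.2)) (by fun_prop)).coe_nnreal_ennreal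
  have : Measurable fun ξ ↦ ∫⁻ η, (jumpDensity a μ μp s ξ η : ℝ≥0∞) :=
    hJ.lintegral_prod_right'
  have htransport : ∫⁻ ξ in cube d, ∫⁻ η, jumpDensity a μ μp s ξ η * F (wrap η, s) =
      ∫⁻ ξ in cube d, (∫⁻ η, jumpDensity a μ μp s ξ η) * F (wrap ξ, s) := by
    rw [setLIntegral_lintegral_swap_of_periodic (by fun_prop) fun ξ η k ↦ by
      simp only [jumpDensity_add_add hμ, isLatticePeriodic_wrap η k]]
    refine lintegral_congr fun ξ ↦ ?_
    simp only [jumpDensity_symm ha hμ μp s _ ξ]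
    exact lintegral_mul_const _ (measurable_jumpDensity_right ha hμ μp s ξ).coe_nnreal_ennreal
  calc ∫⁻ ξ in cube d, ∫⁻ y, F y ∂spaceKernel a μ μp (ξ, s)
      = (∫⁻ ξ in cube d, (∫⁻ η, jumpDensity a μ μp s ξ η) * F (wrap ξ, s)) +
          ∫⁻ ξ in cube d, (1 - ∫⁻ η, jumpDensity a μ μp s ξ η) * F (wrap ξ, s) := by
        simp only [lintegral_spaceKernel ha hμ hF]
        rw [lintegral_add_right _ (by fun_prop), htransport]
    _ = ∫⁻ ξ in cube d, F (wrap ξ, s) := by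
        rw [← lintegral_add_right _ (by fun_prop)]
        refine lintegral_congr fun ξ ↦ ?_
        rw [← add_mul, add_tsub_cancel_of_le (lintegral_jumpDensity_le_one ha hμ s ξ), one_mul]
    _ = ∫⁻ ξ in cube d, F (ξ, s) :=
        setLIntegral_congr_fun (measurableSet_cube d) fun ξ hξ ↦ by rw [wrap_of_mem_cube hξ]

/-- The transition of the space-time cell which first runs time back by an exponential waiting time
of rate `l` and then performs a lazy jump. -/
def cellKernel (a : (Fin d → ℝ) → ℝ) (μ : (Fin d → ℝ) → (Fin d → ℝ) → ℝ → ℝ) (l : ℝ) :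
    Kernel ((Fin d → ℝ) × ℝ) ((Fin d → ℝ) × ℝ) :=
  spaceKernel a μ l ∘ₖ (Kernel.id ∥ₖ timeKernel l)

lemma idParallel_timeKernel_apply (hl : 0 < l) (x : (Fin d → ℝ) × ℝ) :
    (Kernel.id ∥ₖ timeKernel l) x = (timeKernel l x.2).map (Prod.mk x.1) := by
  have := isMarkovKernel_timeKernel hl
  rw [Kernel.parallelComp_apply, Kernel.id_apply, Measure.dirac_prod]

lemma invariant_idParallel_timeKernel (hl : 0 < l) :
    (Kernel.id ∥ₖ timeKernel l).Invariant (cellMeasure d) := by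
  have := isMarkovKernel_timeKernel hl
  rw [Kernel.Invariant, cellMeasure_eq_prod, ← Measure.prod_comp_right,
    (invariant_timeKernel hl).def]

lemma isMarkovKernel_cellKernel (ha : IsJumpDensity a) (hμ : IsCoefficient μ μm μp) :
    IsMarkovKernel (cellKernel a μ μp) := by
  have := isMarkovKernel_timeKernel hμ.upper_pos
  have := isMarkovKernel_spaceKernel ha hμ
  exact inferInstanceAs (IsMarkovKernel (spaceKernel a μ μp ∘ₖ (Kernel.id ∥ₖ timeKernel μp)))

lemma invariant_cellKernel (ha : IsJumpDensity a) (hμ : IsCoefficient μ μm μp) :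
    (cellKernel a μ μp).Invariant (cellMeasure d) :=
  (invariant_spaceKernel ha hμ).comp (invariant_idParallel_timeKernel hμ.upper_pos)

lemma lintegral_cellKernel (hl : 0 < l)
    {F : (Fin d → ℝ) × ℝ → ℝ≥0∞} (hF : Measurable F) (x : (Fin d → ℝ) × ℝ) :
    ∫⁻ y, F y ∂cellKernel a μ l x =
      ∫⁻ τ, ∫⁻ y, F y ∂spaceKernel a μ l (x.1, τ) ∂timeKernel l x.2 := by
  rw [cellKernel, Kernel.lintegral_comp _ _ _ hF, idParallel_timeKernel_apply hl,
    lintegral_map (by fun_prop) (by fun_prop)]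

lemma cellKernel_latticePeriodic (ha : IsJumpDensity a) (hμ : IsCoefficient μ μm μp) (s : ℝ) :
    IsLatticePeriodic fun ξ ↦ cellKernel a μ μp (ξ, s) := fun ξ k ↦
  Measure.ext_of_lintegral _ fun F hF ↦ by
    simp only [lintegral_cellKernel hμ.upper_pos hF, spaceKernel_latticePeriodic ha hμ _ ξ k]

lemma cellKernel_time_periodic (hl : 0 < l) (ξ : Fin d → ℝ) :
    Function.Periodic (fun s ↦ cellKernel a μ l (ξ, s)) 1 := fun s ↦
  Measure.ext_of_lintegral _ fun F hF ↦ by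
    simp only [lintegral_cellKernel hl hF, timeKernel_periodic l s]

lemma spreadsAlong_cellKernel (ha : IsJumpDensity a) (hμ : IsCoefficient μ μm μp) :
    SpreadsAlong (cellKernel a μ μp) (volume.withDensity fun z ↦
      ENNReal.ofReal (μp / (Real.exp μp - 1)) * ENNReal.ofReal (μm / μp * a z)) := fun F hF x ↦ by
  set c := ENNReal.ofReal (μp / (Real.exp μp - 1))
  have hameas := ha.measurable
  have hspace (τ : ℝ) : ∫⁻ z, ENNReal.ofReal (μm / μp * a z) * F (wrap (x.1 + z), τ) ≤
      ∫⁻ y, F y ∂spaceKernel a μ μp (x.1, τ) := by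
    rw [lintegral_spaceKernel ha hμ hF,
      ← lintegral_add_left_eq_self (fun η ↦ (jumpDensity a μ μp τ x.1 η : ℝ≥0∞) * F (wrap η, τ))
        x.1]
    refine le_add_right (lintegral_mono fun z ↦ ?_)
    gcongr
    simpa [ha.even] using ofReal_mul_le_jumpDensity ha hμ hμ.upper_pos τ x.1 (x.1 + z)
  calc ∫⁻ z, (∫⁻ τ in Set.Ioo 0 1, F (wrap (x.1 + z), τ))
        ∂(volume.withDensity fun z ↦ c * ENNReal.ofReal (μm / μp * a z))
      = ∫⁻ z, ∫⁻ τ in Set.Ioo 0 1,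
          c * (ENNReal.ofReal (μm / μp * a z) * F (wrap (x.1 + z), τ)) := by
        rw [lintegral_withDensity_eq_lintegral_mul _ (by fun_prop) (by fun_prop)]
        refine lintegral_congr fun z ↦ ?_
        simp only [Pi.mul_apply, ← mul_assoc]
        rw [lintegral_const_mul _ (by fun_prop)]
    _ = ∫⁻ τ, (∫⁻ z, ENNReal.ofReal (μm / μp * a z) * F (wrap (x.1 + z), τ))
          ∂(c • volume.restrict (Set.Ioo 0 1)) := by
        rw [lintegral_lintegral_swap (by fun_prop), lintegral_smul_measure, smul_eq_mul,
          ← lintegral_const_mul _ (by fun_prop)]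
        exact lintegral_congr fun τ ↦ lintegral_const_mul _ (by fun_prop)
    _ ≤ ∫⁻ τ, ∫⁻ y, F y ∂spaceKernel a μ μp (x.1, τ) ∂timeKernel μp x.2 :=
        lintegral_mono' (smul_le_timeKernel hμ.upper_pos x.2) hspace
    _ = ∫⁻ y, F y ∂cellKernel a μ μp x := (lintegral_cellKernel hμ.upper_pos hF x).symm

theorem isDoeblin_cellKernel (ha : IsJumpDensity a) (hμ : IsCoefficient μ μm μp) :
    IsDoeblin (cellKernel a μ μp) (cellMeasure d) where
  invariant := invariant_cellKernel ha hμ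
  minorized := by
    have hratio : 0 < μm / μp := div_pos hμ.lower_pos hμ.upper_pos
    have hameas := ha.measurable
    refine (spreadsAlong_cellKernel ha hμ).exists_smul_cellMeasure_le_pow (by fun_prop)
      (by simp only [ha.even, implies_true]) ?_
    simp only [ENNReal.ofReal_mul hratio.le]
    rw [lintegral_const_mul _ (by fun_prop), lintegral_const_mul _ (by fun_prop),
      ha.lintegral_eq_one]
    simp [hratio, div_exp_sub_one_pos hμ.upper_pos]

lemma integral_cellKernel (ha : IsJumpDensity a) (hμ : IsCoefficient μ μm μp)
    {F : (Fin d → ℝ) × ℝ → ℝ} (hFmeas : Measurable F)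
    (hFper : ∀ τ, IsLatticePeriodic fun ξ ↦ F (ξ, τ)) {x : (Fin d → ℝ) × ℝ}
    (hF : Integrable F (cellKernel a μ μp x)) :
    ∫ y, F y ∂cellKernel a μ μp x = periodicResponse μp
      (fun τ ↦ F (x.1, τ) + Aop a μ τ (fun η ↦ F (η, τ)) x.1 / μp) x.2 := by
  have hembed := measurableEmbedding_prodMk_left (β := ℝ) x.1
  have htime := idParallel_timeKernel_apply hμ.upper_pos x
  have hspace := ((Measure.integrable_comp_iff hF.1).1 hF).1
  rw [htime, hembed.ae_map_iff] at hspace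
  rw [cellKernel, Kernel.integral_comp hF, htime, hembed.integral_map,
    ← integral_timeKernel hμ.upper_pos]
  refine integral_congr_ae ?_
  filter_upwards [hspace] with τ hτ
  exact integral_spaceKernel ha hμ hFmeas (hFper τ) hτ

end CellKernel

section CellProblem

variable {d : ℕ} {a : (Fin d → ℝ) → ℝ} {μ : (Fin d → ℝ) → (Fin d → ℝ) → ℝ → ℝ}
  {μm μp l R : ℝ} {F : (Fin d → ℝ) × ℝ → ℝ} {θ β β' : (Fin d → ℝ) → ℝ → ℝ}

lemma isCenteredBounded_periodicResponse (hl : 0 < l)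
    (hF : IsCenteredBounded (cellMeasure d) R F) :
    IsCenteredBounded (cellMeasure d) R
      fun x ↦ periodicResponse l (fun τ ↦ F (x.1, τ)) x.2 := by
  have := isMarkovKernel_timeKernel hl
  have key := hF.integral_kernel (δ := 0) (invariant_idParallel_timeKernel hl)
    (by simp [Measure.zero_le])
  simpa only [idParallel_timeKernel_apply hl, (measurableEmbedding_prodMk_left _).integral_map,
    integral_timeKernel hl, NNReal.coe_zero, sub_zero, one_mul] using key

lemma isLatticePeriodic_of_eq_add_integral_cellKernel (ha : IsJumpDensity a)
    (hμ : IsCoefficient μ μm μp) (hθper : ∀ s, IsLatticePeriodic fun ξ ↦ θ ξ s)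
    (hFκ : ∀ x, F x = periodicResponse μp (fun τ ↦ θ x.1 τ / μp) x.2 +
      ∫ y, F y ∂cellKernel a μ μp x) (s : ℝ) : IsLatticePeriodic fun ξ ↦ F (ξ, s) := fun ξ k ↦ by
  have hθk (τ : ℝ) : θ (ξ + fun i ↦ (k i : ℝ)) τ = θ ξ τ := hθper τ ξ k
  have hκk := cellKernel_latticePeriodic ha hμ s ξ k
  simp only at hκk ⊢
  simp only [hFκ (ξ, s), hFκ (ξ + _, s), hθk, hκk]

lemma time_periodic_of_eq_add_integral_cellKernel (hl : 0 < l)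
    (hFκ : ∀ x, F x = periodicResponse l (fun τ ↦ θ x.1 τ / l) x.2 +
      ∫ y, F y ∂cellKernel a μ l x) (ξ : Fin d → ℝ) :
    Function.Periodic (fun s ↦ F (ξ, s)) 1 := fun s ↦ by
  have hκ₁ := cellKernel_time_periodic (a := a) (μ := μ) hl ξ s
  simp only at hκ₁ ⊢
  rw [hFκ, hFκ (ξ, s), hκ₁]
  simp only [← integral_timeKernel hl, timeKernel_periodic l s]

lemma IsCenteredBounded.integrableOn_slice {C : ℝ} (hF : IsCenteredBounded (cellMeasure d) C F)
    (ξ : Fin d → ℝ) : IntegrableOn (fun τ ↦ F (ξ, τ)) (Set.Ioo 0 1) :=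
  Integrable.of_bound (hF.measurable.comp measurable_prodMk_left).aestronglyMeasurable C
    (ae_of_all _ fun τ ↦ hF.abs_le (ξ, τ))

lemma isCellSol_of_eq_add_integral_cellKernel (ha : IsJumpDensity a)
    (hμ : IsCoefficient μ μm μp) (hθ : IsCenteredBounded (cellMeasure d) R fun x ↦ θ x.1 x.2)
    (hθper : ∀ s, IsLatticePeriodic fun ξ ↦ θ ξ s) {C : ℝ}
    (hF : IsCenteredBounded (cellMeasure d) C F)
    (hFκ : ∀ x, F x = periodicResponse μp (fun τ ↦ θ x.1 τ / μp) x.2 +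
      ∫ y, F y ∂cellKernel a μ μp x) :
    IsCellSol a μ θ fun ξ s ↦ F (ξ, s) := by
  have hpos := hμ.upper_pos
  have := isMarkovKernel_cellKernel ha hμ
  have := isMarkovKernel_spaceKernel ha hμ
  have hFper := isLatticePeriodic_of_eq_add_integral_cellKernel ha hμ hθper hFκ
  refine ⟨hF.measurable, fun ξ s ↦ hFper s ξ,
    time_periodic_of_eq_add_integral_cellKernel hpos hFκ,
    (MemLp.of_bound hF.measurable.aestronglyMeasurable C
      (ae_of_all (cellMeasure d) hF.abs_le)).integrable_sq, ae_of_all _ fun ξ s hs ↦ ?_⟩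
  set h₀ : ℝ → ℝ := fun τ ↦ F (ξ, τ) + Aop a μ τ (fun η ↦ F (η, τ)) ξ / μp
  have hh₀ : IntegrableOn h₀ (Set.Ioo 0 1) := by
    have hSF := hF.integral_kernel (δ := 0) (invariant_spaceKernel ha hμ)
      (by simp [Measure.zero_le])
    refine (hSF.integrableOn_slice ξ).congr (ae_of_all _ fun τ ↦ ?_)
    exact integral_spaceKernel ha hμ hF.measurable (hFper τ) (hF.integrable _)
  have hθξ : IntegrableOn (fun τ ↦ θ ξ τ / μp) (Set.Ioo 0 1) :=
    (hθ.integrableOn_slice ξ).div_const _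
  have hresponse (s : ℝ) : F (ξ, s) = periodicResponse μp (fun τ ↦ h₀ τ + θ ξ τ / μp) s := by
    rw [hFκ, integral_cellKernel ha hμ hF.measurable hFper (hF.integrable _),
      periodicResponse_add hpos hh₀ hθξ, add_comm]
  have hode := periodicResponse_eq_add hpos (hh₀.add hθξ) hs
  simp only [Pi.add_def, ← hresponse] at hode
  refine hode.trans ?_
  congr 2 with τ
  simp only [h₀]
  field_simp
  ring

theorem exists_isCellSol (ha : IsJumpDensity a) (hμ : IsCoefficient μ μm μp)
    (hθ : IsCenteredBounded (cellMeasure d) R fun x ↦ θ x.1 x.2)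
    (hθper : ∀ s, IsLatticePeriodic fun ξ ↦ θ ξ s) :
    ∃ β, IsCellSol a μ θ β ∧ ∫ x, β x.1 x.2 ∂cellMeasure d = 0 := by
  have := isMarkovKernel_cellKernel ha hμ
  have hg : IsCenteredBounded (cellMeasure d) (R / μp) fun x ↦ θ x.1 x.2 / μp :=
    ⟨hθ.measurable.div_const _, fun x ↦ by
      rw [abs_div, abs_of_pos hμ.upper_pos]
      exact div_le_div_of_nonneg_right (hθ.abs_le x) hμ.upper_pos.le, by
      rw [integral_div, hθ.integral_eq_zero, zero_div]⟩
  obtain ⟨C, F, hF, hFκ⟩ := (isDoeblin_cellKernel ha hμ).exists_eq_add_integral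
    (isCenteredBounded_periodicResponse hμ.upper_pos hg)
  exact ⟨fun ξ s ↦ F (ξ, s), isCellSol_of_eq_add_integral_cellKernel ha hμ hθ hθper hF hFκ,
    hF.integral_eq_zero⟩

lemma IsCellSol.integrable (hβ : IsCellSol a μ θ β) :
    Integrable (fun x ↦ β x.1 x.2) (cellMeasure d) :=
  have hsq : Integrable (fun x ↦ β x.1 x.2 ^ 2) (cellMeasure d) := hβ.2.2.2.1
  ((memLp_two_iff_integrable_sq hβ.1.aestronglyMeasurable).2 hsq).integrable one_le_two

lemma ae_integrableOn_add_Aop_div (ha : IsJumpDensity a) (hμ : IsCoefficient μ μm μp)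
    (hFmeas : Measurable F) (hFper : ∀ τ, IsLatticePeriodic fun ξ ↦ F (ξ, τ))
    (hF : Integrable F (cellMeasure d)) :
    ∀ᵐ ξ ∂volume.restrict (cube d),
      IntegrableOn (fun τ ↦ F (ξ, τ) + Aop a μ τ (fun η ↦ F (η, τ)) ξ / μp) (Set.Ioo 0 1) := by
  have := isMarkovKernel_spaceKernel ha hμ
  obtain ⟨hint, hint_abs⟩ := integrable_integral_abs_of_invariant (invariant_spaceKernel ha hμ) hF
  have hspace : Integrable (fun x ↦ ∫ y, F y ∂spaceKernel a μ μp x) (cellMeasure d) :=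
    hint_abs.mono' hFmeas.stronglyMeasurable.integral_kernel.aestronglyMeasurable
      (ae_of_all _ fun x ↦ abs_integral_le_integral_abs)
  have hdrift : Integrable (fun x ↦ F x + Aop a μ x.2 (fun η ↦ F (η, x.2)) x.1 / μp)
      (cellMeasure d) := by
    refine hspace.congr ?_
    filter_upwards [hint] with x hx
    exact integral_spaceKernel ha hμ hFmeas (hFper x.2) hx
  rw [cellMeasure_eq_prod] at hdrift
  exact hdrift.prod_right_ae

lemma IsCellSol.ae_eq_add_integral_cellKernel (ha : IsJumpDensity a) (hμ : IsCoefficient μ μm μp)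
    (hθ : Integrable (fun x ↦ θ x.1 x.2) (cellMeasure d)) (hβ : IsCellSol a μ θ β) :
    ∀ᵐ x ∂cellMeasure d, β x.1 x.2 = periodicResponse μp (fun τ ↦ θ x.1 τ / μp) x.2 +
      ∫ y, β y.1 y.2 ∂cellKernel a μ μp x := by
  have hpos := hμ.upper_pos
  have hint := hβ.integrable
  obtain ⟨hmeas, hper, htime, -, hode⟩ := hβ
  have hβper (τ : ℝ) : IsLatticePeriodic fun ξ ↦ β ξ τ := fun ξ ↦ hper ξ τ
  have hslices {G : (Fin d → ℝ) × ℝ → ℝ} (hG : Integrable G (cellMeasure d)) :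
      ∀ᵐ ξ ∂volume.restrict (cube d), IntegrableOn (fun τ ↦ G (ξ, τ)) (Set.Ioo 0 1) := by
    rw [cellMeasure_eq_prod] at hG
    exact hG.prod_right_ae
  have hresponse : ∀ᵐ ξ ∂volume.restrict (cube d), ∀ s ∈ Set.Icc (0 : ℝ) 1,
      β ξ s = periodicResponse μp (fun τ ↦ θ ξ τ / μp) s +
        periodicResponse μp (fun τ ↦ β ξ τ + Aop a μ τ (fun η ↦ β η τ) ξ / μp) s := by
    filter_upwards [hslices hint, hslices (hθ.div_const μp),
      ae_integrableOn_add_Aop_div ha hμ hmeas hβper hint, ae_restrict_of_ae hode]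
      with ξ hβξ hθξ hAξ hodeξ s hs
    rw [← periodicResponse_add hpos hθξ hAξ]
    refine eq_periodicResponse hpos (hθξ.add hAξ) hβξ (by simpa using htime ξ 0) ?_ hs
    intro t ht
    rw [hodeξ t ht]
    congr 2 with τ
    field_simp
    ring
  have hcell : ∀ᵐ x ∂cellMeasure d, x.2 ∈ Set.Ioo (0 : ℝ) 1 :=
    (ae_restrict_mem ((measurableSet_cube d).prod measurableSet_Ioo)).mono fun x hx ↦ hx.2
  have hκ := (integrable_integral_abs_of_invariant (invariant_cellKernel ha hμ) hint).1
  rw [cellMeasure_eq_prod] at hcell hκ ⊢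
  filter_upwards [hκ, hcell, Measure.quasiMeasurePreserving_fst.ae hresponse] with x hκx hx hβx
  rw [integral_cellKernel ha hμ hmeas hβper hκx]
  exact hβx x.2 ⟨hx.1.le, hx.2.le⟩

theorem IsCellSol.ae_eq (ha : IsJumpDensity a) (hμ : IsCoefficient μ μm μp)
    (hθ : Integrable (fun x ↦ θ x.1 x.2) (cellMeasure d)) (hβ : IsCellSol a μ θ β)
    (hβ' : IsCellSol a μ θ β')
    (hmean : ∫ x, β x.1 x.2 ∂cellMeasure d = ∫ x, β' x.1 x.2 ∂cellMeasure d) :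
    ∀ᵐ x ∂cellMeasure d, β x.1 x.2 = β' x.1 x.2 := by
  have := isMarkovKernel_cellKernel ha hμ
  have hinv := invariant_cellKernel ha hμ
  have hzero := (isDoeblin_cellKernel ha hμ).ae_eq_zero (hβ.1.sub hβ'.1)
    (hβ.integrable.sub hβ'.integrable)
    (by rw [integral_sub' hβ.integrable hβ'.integrable, hmean, sub_self]) (by
      filter_upwards [hβ.ae_eq_add_integral_cellKernel ha hμ hθ,
        hβ'.ae_eq_add_integral_cellKernel ha hμ hθ,
        (integrable_integral_abs_of_invariant hinv hβ.integrable).1,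
        (integrable_integral_abs_of_invariant hinv hβ'.integrable).1] with x hx hx' hint hint'
      rw [integral_sub' hint hint', Pi.sub_apply, hx, hx', add_sub_add_left_eq_sub])
  filter_upwards [hzero] with x hx
  exact sub_eq_zero.1 hx

end CellProblem

section Drift

variable {d : ℕ} {a : (Fin d → ℝ) → ℝ} {μ : (Fin d → ℝ) → (Fin d → ℝ) → ℝ → ℝ}
  {μm μp : ℝ}

lemma measurable_driftIntegrand (ha : IsJumpDensity a) (hμ : IsCoefficient μ μm μp) (j : Fin d) :
    Measurable fun p : ((Fin d → ℝ) × ℝ) × (Fin d → ℝ) ↦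
      a (p.1.1 - p.2) * μ p.1.1 p.2 p.1.2 * (p.2 j - p.1.1 j) :=
  (measurable_jumpRate ha hμ).mul (by fun_prop)

lemma abs_driftIntegrand_le (ha : IsJumpDensity a) (hμ : IsCoefficient μ μm μp) (j : Fin d)
    (ξ η : Fin d → ℝ) (s : ℝ) :
    |a (ξ - η) * μ ξ η s * (η j - ξ j)| ≤ μp * (‖ξ - η‖ * a (ξ - η)) := by
  have hcoord : |η j - ξ j| ≤ ‖ξ - η‖ := by
    rw [abs_sub_comm]
    exact norm_le_pi_norm (ξ - η) j
  rw [abs_mul, abs_mul, abs_of_nonneg (ha.nonneg _), abs_of_pos (hμ.pos ξ η s)]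
  calc a (ξ - η) * μ ξ η s * |η j - ξ j| ≤ a (ξ - η) * μp * ‖ξ - η‖ := by
        gcongr
        exacts [mul_nonneg (ha.nonneg _) hμ.upper_pos.le, ha.nonneg _, hμ.le_upper ξ η s]
    _ = μp * (‖ξ - η‖ * a (ξ - η)) := by ring

lemma integrable_driftIntegrand (ha : IsJumpDensity a) (hμ : IsCoefficient μ μm μp)
    (hmom : Integrable fun z ↦ ‖z‖ * a z) (j : Fin d) (ξ : Fin d → ℝ) (s : ℝ) :
    Integrable fun η ↦ a (ξ - η) * μ ξ η s * (η j - ξ j) :=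
  ((hmom.comp_sub_left ξ).const_mul μp).mono'
    ((measurable_driftIntegrand ha hμ j).comp
      (measurable_prodMk_left (x := (ξ, s)))).aestronglyMeasurable
    (ae_of_all _ fun η ↦ abs_driftIntegrand_le ha hμ j ξ η s)

lemma integral_abs_driftIntegrand_le (ha : IsJumpDensity a) (hμ : IsCoefficient μ μm μp)
    (hmom : Integrable fun z ↦ ‖z‖ * a z) (j : Fin d) (ξ : Fin d → ℝ) (s : ℝ) :
    ∫ η, |a (ξ - η) * μ ξ η s * (η j - ξ j)| ≤ μp * ∫ z, ‖z‖ * a z :=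
  calc ∫ η, |a (ξ - η) * μ ξ η s * (η j - ξ j)| ≤ ∫ η, μp * (‖ξ - η‖ * a (ξ - η)) :=
        integral_mono (integrable_driftIntegrand ha hμ hmom j ξ s).abs
          ((hmom.comp_sub_left ξ).const_mul μp) (abs_driftIntegrand_le ha hμ j ξ · s)
    _ = μp * ∫ z, ‖z‖ * a z := by
        rw [integral_const_mul, integral_sub_left_eq_self (fun z ↦ ‖z‖ * a z) volume ξ]

lemma abs_qfun_le (ha : IsJumpDensity a) (hμ : IsCoefficient μ μm μp)
    (hmom : Integrable fun z ↦ ‖z‖ * a z) (j : Fin d) (ξ : Fin d → ℝ) (s : ℝ) :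
    |qfun a μ j ξ s| ≤ μp * ∫ z, ‖z‖ * a z := by
  rw [qfun, abs_neg]
  exact abs_integral_le_integral_abs.trans (integral_abs_driftIntegrand_le ha hμ hmom j ξ s)

lemma measurable_qfun (ha : IsJumpDensity a) (hμ : IsCoefficient μ μm μp) (j : Fin d) :
    Measurable fun x : (Fin d → ℝ) × ℝ ↦ qfun a μ j x.1 x.2 :=
  (measurable_driftIntegrand ha hμ j).stronglyMeasurable.integral_prod_right'.measurable.neg

lemma isLatticePeriodic_qfun (hμ : IsCoefficient μ μm μp) (j : Fin d) (s : ℝ) :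
    IsLatticePeriodic fun ξ ↦ qfun a μ j ξ s := fun ξ k ↦ by
  simp only [qfun]
  rw [← integral_add_right_eq_self _ (fun i ↦ (k i : ℝ))]
  simp only [hμ.add_add, Pi.add_apply, add_sub_add_right_eq_sub]

lemma setIntegral_cube_qfun (ha : IsJumpDensity a) (hμ : IsCoefficient μ μm μp)
    (hmom : Integrable fun z ↦ ‖z‖ * a z) (j : Fin d) (s : ℝ) :
    ∫ ξ in cube d, qfun a μ j ξ s = 0 := by
  have hmeas : Measurable fun p : (Fin d → ℝ) × (Fin d → ℝ) ↦
      a (p.1 - p.2) * μ p.1 p.2 s * (p.2 j - p.1 j) :=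
    (measurable_driftIntegrand ha hμ j).comp
      (by fun_prop : Measurable fun p : (Fin d → ℝ) × (Fin d → ℝ) ↦ ((p.1, s), p.2))
  have : IsFiniteMeasure (volume.restrict (cube d)) := ⟨by simp [volume_cube]⟩
  have hfibre : Integrable (fun ξ ↦ ∫ η, ‖a (ξ - η) * μ ξ η s * (η j - ξ j)‖)
      (volume.restrict (cube d)) :=
    .of_bound hmeas.stronglyMeasurable.norm.integral_prod_right'.aestronglyMeasurable
      (μp * ∫ z, ‖z‖ * a z) (ae_of_all _ fun ξ ↦ by
        rw [Real.norm_of_nonneg (integral_nonneg fun _ ↦ norm_nonneg _)]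
        exact integral_abs_driftIntegrand_le ha hμ hmom j ξ s)
  simp only [qfun]
  rw [integral_neg, neg_eq_zero]
  refine setIntegral_integral_eq_zero_of_antisymm hmeas
    ((integrable_prod_iff hmeas.aestronglyMeasurable).2
      ⟨ae_of_all _ (integrable_driftIntegrand ha hμ hmom j · s), hfibre⟩)
    (fun ξ η k ↦ ?_) fun ξ η ↦ ?_
  · simp only [hμ.add_add, Pi.add_apply, add_sub_add_right_eq_sub]
  · rw [← ha.even, neg_sub, hμ.symm η ξ]
    ring

lemma isCenteredBounded_qfun (ha : IsJumpDensity a) (hμ : IsCoefficient μ μm μp)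
    (hmom : Integrable fun z ↦ ‖z‖ * a z) (j : Fin d) :
    IsCenteredBounded (cellMeasure d) (μp * ∫ z, ‖z‖ * a z) fun x ↦ qfun a μ j x.1 x.2 where
  measurable := measurable_qfun ha hμ j
  abs_le x := abs_qfun_le ha hμ hmom j x.1 x.2
  integral_eq_zero := by
    have hint : Integrable (fun x ↦ qfun a μ j x.1 x.2) (cellMeasure d) :=
      .of_bound (measurable_qfun ha hμ j).aestronglyMeasurable _
        (ae_of_all _ fun x ↦ abs_qfun_le ha hμ hmom j x.1 x.2)
    rw [cellMeasure_eq_prod] at hint ⊢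
    simp [integral_prod_symm _ hint, setIntegral_cube_qfun ha hμ hmom j]

lemma integrable_norm_mul_of_sq {E : Type*} [NormedAddCommGroup E] [MeasurableSpace E]
    [OpensMeasurableSpace E] {m : Measure E} {f : E → ℝ} (hf : Integrable f m)
    (hsq : Integrable (fun z ↦ ‖z‖ ^ 2 * f z) m) : Integrable (fun z ↦ ‖z‖ * f z) m :=
  (hf.norm.add hsq.norm).mono' (measurable_norm.aestronglyMeasurable.mul hf.1)
    (ae_of_all _ fun z ↦ by
      simp only [norm_mul, norm_norm, norm_pow, Pi.add_apply]
      nlinarith [mul_nonneg (sq_nonneg (‖z‖ - 1)) (norm_nonneg (f z)),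
        mul_nonneg (norm_nonneg z) (norm_nonneg (f z)), norm_nonneg (f z)])

end Drift

theorem stmt13_general {d : ℕ} {a : (Fin d → ℝ) → ℝ}
    {μ : (Fin d → ℝ) → (Fin d → ℝ) → ℝ → ℝ} {μm μp : ℝ} (ha : IsJumpDensity a)
    (hμ : IsCoefficient μ μm μp) (hmom : Integrable fun z ↦ ‖z‖ * a z) :
    (∀ j ξ s, Integrable fun η ↦ a (ξ - η) * μ ξ η s * (η j - ξ j)) ∧
    (∃ M, ∀ j ξ s, |qfun a μ j ξ s| ≤ M) ∧
    (∀ j, ∀ᵐ s, ∫ ξ in cube d, qfun a μ j ξ s = 0) ∧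
    ∀ j, ∃ χ, IsCellSol a μ (qfun a μ j) χ ∧
      ∫ p in cube d ×ˢ Set.Ioo (0 : ℝ) 1, χ p.1 p.2 = 0 ∧
      ∀ χ', IsCellSol a μ (qfun a μ j) χ' →
        ∫ p in cube d ×ˢ Set.Ioo (0 : ℝ) 1, χ' p.1 p.2 = 0 →
          ∀ᵐ p ∂volume.restrict (cube d ×ˢ Set.Ioo (0 : ℝ) 1), χ' p.1 p.2 = χ p.1 p.2 := by
  refine ⟨integrable_driftIntegrand ha hμ hmom, ⟨_, abs_qfun_le ha hμ hmom⟩,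
    fun j ↦ ae_of_all _ (setIntegral_cube_qfun ha hμ hmom j), fun j ↦ ?_⟩
  have hq := isCenteredBounded_qfun ha hμ hmom j
  obtain ⟨χ, hχ, hχmean⟩ := exists_isCellSol ha hμ hq (isLatticePeriodic_qfun hμ j)
  exact ⟨χ, hχ, hχmean, fun χ' hχ' hχ'mean ↦
    hχ'.ae_eq ha hμ (hq.integrable _) hχ (hχ'mean.trans hχmean.symm)⟩

/-- Each `q_j` is well defined, bounded (in `L^∞(𝕋^{d+1})`), has zero mean over `𝕋^d`
for a.e. `s`, and the corrector equation `∂_s χ_j - A(s)χ_j = q_j` has a time-periodic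
solution, unique under the normalization `∫_{𝕋^{d+1}} χ_j = 0`. -/
theorem stmt13 {d : ℕ} (hd : 1 ≤ d)
    (a : (Fin d → ℝ) → ℝ) (μ : (Fin d → ℝ) → (Fin d → ℝ) → ℝ → ℝ) (μm μp : ℝ)
    (hameas : Measurable a) (hanonneg : ∀ z, 0 ≤ a z)
    (haint : Integrable a) (hamass : ∫ z, a z = 1)
    (hamom : Integrable (fun z => ‖z‖ ^ 2 * a z))
    (hasymm : ∀ z, a (-z) = a z)
    (hμmeas : Measurable fun p : (Fin d → ℝ) × (Fin d → ℝ) × ℝ => μ p.1 p.2.1 p.2.2)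
    (hμper₁ : ∀ ξ η s, ∀ k : Fin d → ℤ, μ (ξ + fun i => (k i : ℝ)) η s = μ ξ η s)
    (hμper₂ : ∀ ξ η s, ∀ k : Fin d → ℤ, μ ξ (η + fun i => (k i : ℝ)) s = μ ξ η s)
    (hμper₃ : ∀ ξ η s, μ ξ η (s + 1) = μ ξ η s)
    (hμsymm : ∀ ξ η s, μ ξ η s = μ η ξ s)
    (hμm : 0 < μm) (hμlb : ∀ ξ η s, μm ≤ μ ξ η s) (hμub : ∀ ξ η s, μ ξ η s ≤ μp) :
    (∀ (j : Fin d) (ξ : Fin d → ℝ) (s : ℝ),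
      Integrable fun η => a (ξ - η) * μ ξ η s * (η j - ξ j)) ∧
    (∃ M : ℝ, ∀ (j : Fin d) (ξ : Fin d → ℝ) (s : ℝ), |qfun a μ j ξ s| ≤ M) ∧
    (∀ j : Fin d, ∀ᵐ s ∂(volume : Measure ℝ),
      (∫ ξ in cube d, qfun a μ j ξ s) = 0) ∧
    (∀ j : Fin d, ∃ χ, IsCellSol a μ (qfun a μ j) χ ∧
      (∫ p in cube d ×ˢ Set.Ioo (0 : ℝ) 1, χ (Prod.fst p) (Prod.snd p)) = 0 ∧
      ∀ χ', IsCellSol a μ (qfun a μ j) χ' →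
        (∫ p in cube d ×ˢ Set.Ioo (0 : ℝ) 1, χ' (Prod.fst p) (Prod.snd p)) = 0 →
        ∀ᵐ p ∂(volume.restrict (cube d ×ˢ Set.Ioo (0 : ℝ) 1)),
          χ' (Prod.fst p) (Prod.snd p) = χ (Prod.fst p) (Prod.snd p)) :=
  stmt13_general ⟨hameas, hanonneg, hamass, hasymm⟩
    ⟨hμmeas, fun η s ξ k ↦ hμper₁ ξ η s k, hμsymm, hμm, hμlb, hμub⟩
    (integrable_norm_mul_of_sq haint hamom)
end
end

section
/- The effective matrix a^eff is positive definite: there exists c > 0 such that (a^eff ζ) · ζ ≥ c |ζ|² for all ζ ∈ ℝ^d. -/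
open MeasureTheory

noncomputable section

/-!
Put the measure `μ(ξ, ξ + z, s) a(z) dξ ds dz` on the jumps `ξ → ξ + z` at time `s`. Reversing jumps
preserves it, since `a` is even and `μ` is symmetric and periodic. Let
`R_j = z_j - (χ_j(ξ + z, s) - χ_j(ξ, s))` be the displacement corrected by the increment of `χ_j`.
The corrector equation says `∂_s χ_j = -∫ a(z) μ(ξ, ξ + z, s) R_j dz`, so the product rule and
periodicity in time give `∫ (χ_i R_j + χ_j R_i) = 0`. Together with the reversal of jumps this turns
the effective matrix into the Gram matrix `a^eff_ij = ½ ∫ R_i R_j`, and what is left is the linear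
independence of the `R_j` in `L²`. If `∑ ζ_j R_j = 0`, then `∑ ζ_j χ_j` has increment `ζ · z` along
almost every jump. The displacements `z` with this property form a subgroup of `ℝ^d` which is not
Lebesgue-null, so by Steinhaus it is everything; along integer `z` the increment vanishes by
periodicity, whence `ζ = 0`.
-/

section Hilbert

open scoped RealInnerProductSpace

theorem exists_pos_mul_sum_sq_le_gram {ι E : Type*} [Fintype ι] [NormedAddCommGroup E]
    [InnerProductSpace ℝ E] {v : ι → E} (hv : LinearIndependent ℝ v) :
    ∃ c : ℝ, 0 < c ∧ ∀ ζ : ι → ℝ,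
      c * (∑ i, ζ i ^ 2) ≤ ∑ i, (∑ j, ⟪v i, v j⟫ * ζ j) * ζ i := by
  let T : EuclideanSpace ℝ ι →ₗ[ℝ] E :=
    Fintype.linearCombination ℝ v ∘ₗ (WithLp.linearEquiv 2 ℝ (ι → ℝ)).toLinearMap
  have hT : LinearMap.ker T = ⊥ := LinearMap.ker_eq_bot.2 <|
    hv.fintypeLinearCombination_injective.comp (WithLp.linearEquiv 2 ℝ (ι → ℝ)).injective
  obtain ⟨K, hKpos, hK⟩ := T.exists_antilipschitzWith hT
  refine ⟨((K : ℝ) ^ 2)⁻¹, by positivity, fun ζ => ?_⟩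
  have hnorm : ‖WithLp.toLp 2 ζ‖ ≤ K * ‖∑ i, ζ i • v i‖ := by
    simpa [T, Fintype.linearCombination_apply] using hK.le_mul_norm (map_zero T) (WithLp.toLp 2 ζ)
  calc ((K : ℝ) ^ 2)⁻¹ * ∑ i, ζ i ^ 2 = ((K : ℝ) ^ 2)⁻¹ * ‖WithLp.toLp 2 ζ‖ ^ 2 := by
        rw [EuclideanSpace.real_norm_sq_eq]
    _ ≤ ‖∑ i, ζ i • v i‖ ^ 2 := by
        rw [inv_mul_le_iff₀ (by positivity), ← mul_pow]
        gcongr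
    _ = ∑ i, (∑ j, ⟪v i, v j⟫ * ζ j) * ζ i := by
        rw [← real_inner_self_eq_norm_sq, sum_inner]
        simp only [inner_sum, inner_smul_left, inner_smul_right, Finset.sum_mul]
        refine Finset.sum_congr rfl fun i _ => Finset.sum_congr rfl fun j _ => ?_
        rw [conj_trivial]; ring

-- In the application `J` is the pull-back along the reversal of jumps, `l₁` and `l₂` are
-- displacements, `x₁` and `x₂` correctors.
theorem symm_flux_eq_inner_of_reflection {E : Type*} [NormedAddCommGroup E] [InnerProductSpace ℝ E]
    (J : E →ₗᵢ[ℝ] E) {l₁ l₂ x₁ x₂ : E} (hl₁ : J l₁ = -l₁) (hl₂ : J l₂ = -l₂)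
    (hx₁ : J (J x₁) = x₁)
    (horth : ⟪x₁, l₂ - (J x₂ - x₂)⟫ + ⟪x₂, l₁ - (J x₁ - x₁)⟫ = 0) :
    1 / 2 * ⟪l₁, l₂⟫ - ⟪l₁, J x₂⟫ + (1 / 2 * ⟪l₂, l₁⟫ - ⟪l₂, J x₁⟫) =
      ⟪l₁ - (J x₁ - x₁), l₂ - (J x₂ - x₂)⟫ := by
  have hlx {l : E} (x : E) (hl : J l = -l) : ⟪l, J x⟫ = -⟪l, x⟫ := by
    rw [← J.inner_map_map l x, hl, inner_neg_left, neg_neg]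
  have hxx : ⟪J x₁, J x₂⟫ = ⟪x₁, x₂⟫ := J.inner_map_map x₁ x₂
  have hxJx : ⟪x₂, J x₁⟫ = ⟪x₁, J x₂⟫ := by
    rw [← J.inner_map_map x₂, hx₁, real_inner_comm]
  simp only [inner_sub_left, inner_sub_right] at horth ⊢
  linarith [hlx x₂ hl₁, hlx x₁ hl₂, hxx, hxJx, real_inner_comm l₁ l₂, real_inner_comm l₁ x₂,
    real_inner_comm l₂ x₁, real_inner_comm l₂ (J x₁), real_inner_comm x₁ x₂,
    real_inner_comm (J x₁) x₂]

variable {Ω : Type*} [MeasurableSpace Ω] {P : Measure Ω}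

theorem inner_toLp_toLp {f g : Ω → ℝ} (hf : MemLp f 2 P) (hg : MemLp g 2 P) :
    ⟪hf.toLp, hg.toLp⟫ = ∫ ω, f ω * g ω ∂P := by
  rw [L2.inner_def]
  refine integral_congr_ae ?_
  filter_upwards [hf.coeFn_toLp, hg.coeFn_toLp] with ω hfω hgω
  rw [hfω, hgω, real_inner_eq_re_inner, RCLike.inner_apply, conj_trivial, mul_comm,
    RCLike.re_to_real]

theorem linearIndependent_toLp {ι : Type*} [Fintype ι] {R : ι → Ω → ℝ} (hR : ∀ i, MemLp (R i) 2 P)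
    (hindep : ∀ ζ : ι → ℝ, (∀ᵐ ω ∂P, ∑ i, ζ i * R i ω = 0) → ζ = 0) :
    LinearIndependent ℝ fun i => (hR i).toLp := by
  refine Fintype.linearIndependent_iff.2 fun ζ hζ => congrFun <| hindep ζ ?_
  have hsum : ⇑(∑ i, ζ i • (hR i).toLp : Lp ℝ 2 P) =ᵐ[P] fun ω => ∑ i, ζ i * R i ω := by
    refine (Lp.coeFn_finsetSum Finset.univ fun i => ζ i • (hR i).toLp).trans ?_
    have h : ∀ᵐ ω ∂P, ∀ i, (ζ i • (hR i).toLp : Lp ℝ 2 P) ω = ζ i * R i ω := by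
      refine ae_all_iff.2 fun i => ?_
      filter_upwards [Lp.coeFn_smul (ζ i) (hR i).toLp, (hR i).coeFn_toLp] with ω h₁ h₂
      rw [h₁, Pi.smul_apply, h₂, smul_eq_mul]
    filter_upwards [h] with ω hω
    simp only [Finset.sum_apply, hω]
  rw [hζ] at hsum
  exact hsum.symm.trans (Lp.coeFn_zero ..)

theorem exists_pos_mul_sum_sq_le_integral_gram {ι : Type*} [Fintype ι] {R : ι → Ω → ℝ}
    (hR : ∀ i, MemLp (R i) 2 P)
    (hindep : ∀ ζ : ι → ℝ, (∀ᵐ ω ∂P, ∑ i, ζ i * R i ω = 0) → ζ = 0) :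
    ∃ c : ℝ, 0 < c ∧ ∀ ζ : ι → ℝ,
      c * (∑ i, ζ i ^ 2) ≤ ∑ i, (∑ j, (∫ ω, R i ω * R j ω ∂P) * ζ j) * ζ i := by
  simpa only [inner_toLp_toLp] using
    exists_pos_mul_sum_sq_le_gram (linearIndependent_toLp hR hindep)

theorem integral_symm_flux_eq_integral_mul {Φ : Ω → Ω} (hΦ : MeasurePreserving Φ P P)
    {L₁ L₂ X₁ X₂ : Ω → ℝ} (hL₁ : MemLp L₁ 2 P) (hL₂ : MemLp L₂ 2 P) (hX₁ : MemLp X₁ 2 P)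
    (hX₂ : MemLp X₂ 2 P) (hLΦ₁ : L₁ ∘ Φ = -L₁) (hLΦ₂ : L₂ ∘ Φ = -L₂) (hXΦ : (X₁ ∘ Φ) ∘ Φ = X₁)
    (horth : (∫ ω, X₁ ω * (L₂ ω - (X₂ (Φ ω) - X₂ ω)) ∂P) +
      ∫ ω, X₂ ω * (L₁ ω - (X₁ (Φ ω) - X₁ ω)) ∂P = 0) :
    (∫ ω, (1 / 2 * (L₁ ω * L₂ ω) - L₁ ω * X₂ (Φ ω)) ∂P) +
        ∫ ω, (1 / 2 * (L₂ ω * L₁ ω) - L₂ ω * X₁ (Φ ω)) ∂P =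
      ∫ ω, (L₁ ω - (X₁ (Φ ω) - X₁ ω)) * (L₂ ω - (X₂ (Φ ω) - X₂ ω)) ∂P := by
  let J := Lp.compMeasurePreservingₗᵢ ℝ (E := ℝ) (p := 2) Φ hΦ
  have hJ {f : Ω → ℝ} (hf : MemLp f 2 P) :
      J hf.toLp = (hf.comp_measurePreserving hΦ).toLp := rfl
  have hXΦ₁ := hX₁.comp_measurePreserving hΦ
  have hXΦ₂ := hX₂.comp_measurePreserving hΦ
  have hflux {L X : Ω → ℝ} {L' : Ω → ℝ} (hL : MemLp L 2 P) (hL' : MemLp L' 2 P)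
      (hX : MemLp (X ∘ Φ) 2 P) :
      ∫ ω, (1 / 2 * (L ω * L' ω) - L ω * X (Φ ω)) ∂P =
        1 / 2 * ⟪hL.toLp, hL'.toLp⟫ - ⟪hL.toLp, hX.toLp⟫ := by
    rw [inner_toLp_toLp, inner_toLp_toLp, ← integral_const_mul]
    exact integral_sub ((hL.integrable_mul hL').const_mul _) (hL.integrable_mul hX)
  have hodd {L : Ω → ℝ} (hL : MemLp L 2 P) (hLΦ : L ∘ Φ = -L) : J hL.toLp = -hL.toLp := by
    rw [hJ, ← MemLp.toLp_neg]
    exact MemLp.toLp_congr _ _ (.of_eq hLΦ)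
  rw [hflux hL₁ hL₂ hXΦ₂, hflux hL₂ hL₁ hXΦ₁]
  refine (symm_flux_eq_inner_of_reflection J (x₁ := hX₁.toLp) (x₂ := hX₂.toLp) (hodd hL₁ hLΦ₁)
    (hodd hL₂ hLΦ₂) ?_ ?_).trans ?_
  · exact MemLp.toLp_congr (hXΦ₁.comp_measurePreserving hΦ) hX₁ (.of_eq hXΦ)
  · exact (congrArg₂ (· + ·) (inner_toLp_toLp hX₁ (hL₂.sub (hXΦ₂.sub hX₂)))
      (inner_toLp_toLp hX₂ (hL₁.sub (hXΦ₁.sub hX₁)))).trans horth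
  · exact inner_toLp_toLp (hL₁.sub (hXΦ₁.sub hX₁)) (hL₂.sub (hXΦ₂.sub hX₂))

end Hilbert

section Measure

open scoped ENNReal

variable {α β : Type*} [MeasurableSpace α] [MeasurableSpace β]

theorem measurePreserving_withDensity {m : Measure α} {n : Measure β} {Φ : α → β}
    (hΦ : MeasurePreserving Φ m n) {w : β → ℝ≥0∞} (hw : Measurable w) :
    MeasurePreserving Φ (m.withDensity (w ∘ Φ)) (n.withDensity w) := by
  refine ⟨hΦ.measurable, Measure.ext fun s hs => ?_⟩
  rw [Measure.map_apply hΦ.measurable hs, withDensity_apply _ (hΦ.measurable hs),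
    withDensity_apply _ hs]
  exact hΦ.setLIntegral_comp_preimage hs hw

theorem memLp_withDensity_of_le_const {m : Measure α} {w : α → ℝ≥0∞} {C p : ℝ≥0∞} (hC : C ≠ ∞)
    (hwC : ∀ x, w x ≤ C) {f : α → ℝ} (hf : MemLp f p m) : MemLp f p (m.withDensity w) :=
  hf.of_measure_le_smul hC <|
    (withDensity_mono (.of_forall hwC)).trans_eq (withDensity_const C)

theorem addSubgroup_eq_top_of_ae_mem {G : Type*} [AddGroup G] [TopologicalSpace G]
    [IsTopologicalAddGroup G] [LocallyCompactSpace G] [PreconnectedSpace G] [MeasurableSpace G]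
    [BorelSpace G] {ν κ : Measure G} [ν.IsAddHaarMeasure] [ν.InnerRegular] [NeZero κ]
    (hκ : κ ≪ ν) {H : AddSubgroup G} (hH : ∀ᵐ z ∂κ, z ∈ H) : H = ⊤ := by
  obtain ⟨S, hSH, hS, hSc⟩ : ∃ S ⊆ (H : Set G), MeasurableSet S ∧ κ Sᶜ = 0 :=
    ⟨(toMeasurable κ (H : Set G)ᶜ)ᶜ, Set.compl_subset_comm.1 (subset_toMeasurable _ _),
      (measurableSet_toMeasurable _ _).compl, by
        rw [compl_compl, measure_toMeasurable]; exact hH⟩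
  have hpos : 0 < ν S := by
    refine pos_iff_ne_zero.2 fun hνS => NeZero.ne κ ?_
    rw [← Measure.measure_univ_eq_zero, ← Set.union_compl_self S]
    exact measure_union_null (hκ hνS) hSc
  have hnhds : (H : Set G) ∈ nhds 0 := by
    filter_upwards [Measure.sub_mem_nhds_zero_of_addHaar_pos ν S hS hpos]
    rintro _ ⟨x, hx, y, hy, rfl⟩
    exact H.sub_mem (hSH hx) (hSH hy)
  have hopen : IsOpen (H : Set G) := H.isOpen_of_mem_nhds hnhds
  exact SetLike.coe_injective <|
    IsClopen.eq_univ ⟨H.isClosed_of_isOpen hopen, hopen⟩ ⟨0, H.zero_mem⟩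

end Measure

theorem measurePreserving_fract (t : ℝ) :
    MeasurePreserving Int.fract (volume.restrict (Set.Ioc t (t + 1)))
      (volume.restrict (Set.Ico (0 : ℝ) 1)) := by
  have h (t : ℝ) : (volume.restrict (Set.Ioc t (t + 1))).map Int.fract =
      (volume : Measure UnitAddCircle).map fun x => (AddCircle.equivIco 1 0 x : ℝ) := by
    rw [← (UnitAddCircle.measurePreserving_mk t).map_eq, Measure.map_map]
    · refine congrArg (Measure.map · _) (funext fun x => ?_)
      simp
    · exact measurable_subtype_coe.comp (AddCircle.measurableEquivIco 1 0).measurable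
    · exact AddCircle.measurable_mk'
  refine ⟨measurable_fract, ?_⟩
  rw [h t, ← h 0, zero_add, ← Measure.restrict_congr_set Ico_ae_eq_Ioc]
  calc _ = (volume.restrict (Set.Ico (0 : ℝ) 1)).map id :=
        Measure.map_congr <| (ae_restrict_mem measurableSet_Ico).mono fun x hx =>
          Int.fract_eq_self.2 hx
    _ = _ := Measure.map_id

theorem measurePreserving_fract_add_right (c : ℝ) :
    MeasurePreserving (fun x => Int.fract (x + c)) (volume.restrict (Set.Ico (0 : ℝ) 1))
      (volume.restrict (Set.Ico (0 : ℝ) 1)) := by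
  have htrans : MeasurePreserving (· + c) (volume.restrict (Set.Ioc (0 : ℝ) 1))
      (volume.restrict (Set.Ioc c (c + 1))) := by
    have := (measurePreserving_add_right volume c).restrict_preimage
      (measurableSet_Ioc (a := c) (b := c + 1))
    rwa [Set.preimage_add_const_Ioc, sub_self, add_sub_cancel_left] at this
  rw [← Measure.restrict_congr_set Ico_ae_eq_Ioc] at htrans
  exact (measurePreserving_fract c).comp htrans

theorem integral_mul_add_mul_eq_sub_of_eq_add_integral {f₁ f₂ g₁ g₂ : ℝ → ℝ} {a b : ℝ}
    (hg₁ : IntervalIntegrable g₁ volume a b) (hg₂ : IntervalIntegrable g₂ volume a b)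
    (hf₁ : ∀ s ∈ Set.uIcc a b, f₁ s = f₁ a + ∫ τ in a..s, g₁ τ)
    (hf₂ : ∀ s ∈ Set.uIcc a b, f₂ s = f₂ a + ∫ τ in a..s, g₂ τ) :
    ∫ s in a..b, (f₁ s * g₂ s + f₂ s * g₁ s) = f₁ b * f₂ b - f₁ a * f₂ a := by
  let F (f g : ℝ → ℝ) (s : ℝ) : ℝ := f a + ∫ τ in a..s, g τ
  have hac {f g : ℝ → ℝ} (hg : IntervalIntegrable g volume a b) :
      AbsolutelyContinuousOnInterval (F f g) a b := by
    simpa only [AbsolutelyContinuousOnInterval, F, dist_add_left] using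
      hg.absolutelyContinuousOnInterval_intervalIntegral Set.left_mem_uIcc
  have hderiv {f g : ℝ → ℝ} (hg : IntervalIntegrable g volume a b) :
      ∀ᵐ s, s ∈ Set.uIoc a b → deriv (F f g) s = g s := by
    filter_upwards [hg.ae_hasDerivAt_integral] with s hs hmem
    exact ((hs (Set.uIoc_subset_uIcc hmem) a Set.left_mem_uIcc).const_add _).deriv
  rw [hf₁ b Set.right_mem_uIcc, hf₂ b Set.right_mem_uIcc]
  have hparts := (hac (f := f₁) hg₁).integral_deriv_mul_eq_sub (hac (f := f₂) hg₂)
  simp only [F, intervalIntegral.integral_same, add_zero] at hparts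
  rw [← hparts]
  refine intervalIntegral.integral_congr_ae ?_
  filter_upwards [hderiv (f := f₁) hg₁, hderiv (f := f₂) hg₂] with s h₁ h₂ hs
  have hs' := Set.uIoc_subset_uIcc hs
  rw [hf₁ s hs', hf₂ s hs', h₁ hs, h₂ hs]
  ring

section Torus

variable {d : ℕ}

/-- Invariance under translations by `ℤ^d`: such an `f` is a function on the torus `𝕋^d`. -/
def IsCellPeriodic {α : Type*} (f : (Fin d → ℝ) → α) : Prop :=
  ∀ ξ, ∀ k : Fin d → ℤ, f (ξ + fun i => (k i : ℝ)) = f ξ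

/-- The representative in `cube d` of the class of `ξ` modulo `ℤ^d`. -/
def toCell (ξ : Fin d → ℝ) : Fin d → ℝ := fun i => Int.fract (ξ i)

theorem measurable_toCell : Measurable (toCell (d := d)) :=
  measurable_pi_iff.2 fun i => measurable_fract.comp (measurable_pi_apply i)

theorem measurePreserving_toCell_add_right (z : Fin d → ℝ) :
    MeasurePreserving (fun ξ => toCell (ξ + z)) (volume.restrict (cube d))
      (volume.restrict (cube d)) := by
  rw [cube, volume_pi, Measure.restrict_pi_pi]
  exact measurePreserving_pi _ _ fun i => measurePreserving_fract_add_right (z i)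

namespace IsCellPeriodic

variable {α : Type*} {f : (Fin d → ℝ) → α}

theorem apply_toCell_add (hf : IsCellPeriodic f) (ξ z : Fin d → ℝ) :
    f (toCell ξ + z) = f (ξ + z) := by
  rw [← hf (toCell ξ + z) fun i => ⌊ξ i⌋, add_right_comm]
  exact congrArg (fun η => f (η + z)) (funext fun i => Int.fract_add_floor (ξ i))

theorem apply_toCell (hf : IsCellPeriodic f) (ξ : Fin d → ℝ) : f (toCell ξ) = f ξ := by
  simpa only [add_zero] using hf.apply_toCell_add ξ 0

end IsCellPeriodic

/-- Lebesgue measure on the space-time torus `𝕋^{d+1}`, with points written `(ξ, s)`. -/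
def torusMeasure (d : ℕ) : Measure ((Fin d → ℝ) × ℝ) :=
  (volume.restrict (cube d)).prod (volume.restrict (Set.Ioo 0 1))

instance : IsProbabilityMeasure (torusMeasure d) := by
  have hcube : IsProbabilityMeasure (volume.restrict (cube d)) :=
    ⟨by simp [cube, volume_pi, Measure.pi_pi]⟩
  have htime : IsProbabilityMeasure (volume.restrict (Set.Ioo (0 : ℝ) 1)) := ⟨by simp⟩
  rw [torusMeasure]
  infer_instance

theorem measurePreserving_torus_translate (z : Fin d → ℝ) :
    MeasurePreserving (fun c : (Fin d → ℝ) × ℝ => (toCell (c.1 + z), c.2))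
      (torusMeasure d) (torusMeasure d) :=
  (measurePreserving_toCell_add_right z).prod (.id _)

/-- The displacements `z` along which `f` has, at almost every point of the torus, the increment
`ℓ z`. -/
def incrementSubgroup (f : (Fin d → ℝ) → ℝ → ℝ) (hf : ∀ s, IsCellPeriodic (f · s))
    (ℓ : (Fin d → ℝ) →+ ℝ) : AddSubgroup (Fin d → ℝ) where
  carrier := {z | ∀ᵐ c ∂torusMeasure d, f (c.1 + z) c.2 - f c.1 c.2 = ℓ z}
  zero_mem' := by simp
  add_mem' {y z} hy hz := by
    filter_upwards [hy, (measurePreserving_torus_translate y).quasiMeasurePreserving.ae hz]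
      with c hyc hzc
    rw [(hf c.2).apply_toCell_add, (hf c.2).apply_toCell, add_assoc] at hzc
    rw [map_add, ← hyc, ← hzc]
    ring
  neg_mem' {z} hz := by
    filter_upwards [(measurePreserving_torus_translate (-z)).quasiMeasurePreserving.ae hz]
      with c hzc
    rw [(hf c.2).apply_toCell_add, (hf c.2).apply_toCell, neg_add_cancel_right] at hzc
    rw [map_neg, ← hzc]
    ring

theorem mem_incrementSubgroup {f : (Fin d → ℝ) → ℝ → ℝ} {hf : ∀ s, IsCellPeriodic (f · s)}
    {ℓ : (Fin d → ℝ) →+ ℝ} {z : Fin d → ℝ} :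
    z ∈ incrementSubgroup f hf ℓ ↔
      ∀ᵐ c ∂torusMeasure d, f (c.1 + z) c.2 - f c.1 c.2 = ℓ z :=
  Iff.rfl

theorem map_intCast_eq_zero_of_mem_incrementSubgroup {f : (Fin d → ℝ) → ℝ → ℝ}
    {hf : ∀ s, IsCellPeriodic (f · s)} {ℓ : (Fin d → ℝ) →+ ℝ} {k : Fin d → ℤ}
    (hk : (fun i => (k i : ℝ)) ∈ incrementSubgroup f hf ℓ) : ℓ (fun i => (k i : ℝ)) = 0 := by
  obtain ⟨c, hc⟩ := (mem_incrementSubgroup.1 hk).exists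
  exact hc.symm.trans (sub_eq_zero.2 (hf c.2 c.1 k))

theorem eq_zero_of_ae_increment_eq {κ : Measure (Fin d → ℝ)} [SFinite κ] [NeZero κ]
    (hκ : κ ≪ volume) {f : (Fin d → ℝ) → ℝ → ℝ} (hf : ∀ s, IsCellPeriodic (f · s))
    {ℓ : (Fin d → ℝ) →ₗ[ℝ] ℝ}
    (h : ∀ᵐ p ∂(torusMeasure d).prod κ, f (p.1.1 + p.2) p.1.2 - f p.1.1 p.1.2 = ℓ p.2) :
    ℓ = 0 := by
  have hmem : ∀ᵐ z ∂κ, z ∈ incrementSubgroup f hf ℓ :=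
    Measure.ae_ae_of_ae_prod (Measure.measurePreserving_swap.quasiMeasurePreserving.ae h)
  have htop : incrementSubgroup f hf ℓ = ⊤ := addSubgroup_eq_top_of_ae_mem hκ hmem
  refine (Pi.basisFun ℝ (Fin d)).ext fun i => ?_
  have hbasis : Pi.basisFun ℝ (Fin d) i = fun j => ((Pi.single i 1 : Fin d → ℤ) j : ℝ) := by
    ext j
    simp [Pi.single_apply]
  rw [hbasis]
  exact map_intCast_eq_zero_of_mem_incrementSubgroup (htop ▸ AddSubgroup.mem_top _)

end Torus

section Jumps

open scoped ENNReal

variable {d : ℕ}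

/-- The hypotheses on the jump kernel `a`: a nonzero, symmetric, integrable density with finite
second moment. -/
structure IsJumpKernel (a : (Fin d → ℝ) → ℝ) : Prop where
  measurable : Measurable a
  nonneg : ∀ z, 0 ≤ a z
  integrable : Integrable a
  integral_ne_zero : ∫ z, a z ≠ 0
  integrable_norm_sq_mul : Integrable fun z => ‖z‖ ^ 2 * a z
  symm : ∀ z, a (-z) = a z

/-- The measure `a(z) dz` of displacements. -/
def kernelMeasure (a : (Fin d → ℝ) → ℝ) : Measure (Fin d → ℝ) :=
  volume.withDensity fun z => ENNReal.ofReal (a z)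

namespace IsJumpKernel

variable {a : (Fin d → ℝ) → ℝ}

theorem isFiniteMeasure_kernelMeasure (ha : IsJumpKernel a) :
    IsFiniteMeasure (kernelMeasure a) :=
  isFiniteMeasure_withDensity_ofReal ha.integrable.2

theorem isNegInvariant_kernelMeasure (ha : IsJumpKernel a) :
    (kernelMeasure a).IsNegInvariant := by
  have hneg := measurePreserving_withDensity
    (Measure.measurePreserving_neg (volume : Measure (Fin d → ℝ))) ha.measurable.ennreal_ofReal
  have hsymm : (fun z => ENNReal.ofReal (a z)) ∘ Neg.neg = fun z => ENNReal.ofReal (a z) :=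
    funext fun z => congrArg ENNReal.ofReal (ha.symm z)
  rw [hsymm] at hneg
  exact ⟨hneg.map_eq⟩

theorem integral_kernelMeasure (ha : IsJumpKernel a) (F : (Fin d → ℝ) → ℝ) :
    ∫ z, F z ∂kernelMeasure a = ∫ z, a z * F z := by
  rw [kernelMeasure, integral_withDensity_eq_integral_toReal_smul ha.measurable.ennreal_ofReal
    (.of_forall fun _ => ENNReal.ofReal_lt_top)]
  simp only [ENNReal.toReal_ofReal (ha.nonneg _), smul_eq_mul]

theorem neZero_kernelMeasure (ha : IsJumpKernel a) : NeZero (kernelMeasure a) := by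
  refine ⟨fun h => ha.integral_ne_zero ?_⟩
  simpa [h] using (ha.integral_kernelMeasure fun _ => 1).symm

theorem integral_mul_eq_integral_kernelMeasure (ha : IsJumpKernel a) (F : (Fin d → ℝ) → ℝ)
    (ξ : Fin d → ℝ) : ∫ η, a (ξ - η) * F η = ∫ z, F (ξ + z) ∂kernelMeasure a := by
  rw [ha.integral_kernelMeasure, ← integral_add_left_eq_self _ ξ]
  simp only [sub_add_cancel_left, ha.symm]

theorem memLp_apply (ha : IsJumpKernel a) (j : Fin d) :
    MemLp (fun z => z j) 2 (kernelMeasure a) := by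
  rw [memLp_two_iff_integrable_sq (measurable_pi_apply j).aestronglyMeasurable, kernelMeasure,
    integrable_withDensity_iff_integrable_smul' ha.measurable.ennreal_ofReal
      (.of_forall fun _ => ENNReal.ofReal_lt_top)]
  have hmeas : Measurable a := ha.measurable
  refine ha.integrable_norm_sq_mul.mono' (by fun_prop) (.of_forall fun z => ?_)
  have hz : z j ^ 2 ≤ ‖z‖ ^ 2 := sq_le_sq.2 <| by
    simpa only [Real.norm_eq_abs, abs_norm] using norm_le_pi_norm z j
  rw [ENNReal.toReal_ofReal (ha.nonneg z), smul_eq_mul, mul_comm,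
    Real.norm_of_nonneg (mul_nonneg (sq_nonneg _) (ha.nonneg z))]
  exact mul_le_mul_of_nonneg_right hz (ha.nonneg z)

end IsJumpKernel

/-- The hypotheses on the jump rate `μ`: positive, bounded, symmetric, and periodic in space. -/
structure IsJumpRate (μ : (Fin d → ℝ) → (Fin d → ℝ) → ℝ → ℝ) : Prop where
  measurable : Measurable fun p : (Fin d → ℝ) × (Fin d → ℝ) × ℝ => μ p.1 p.2.1 p.2.2
  periodic_left : ∀ η s, IsCellPeriodic (μ · η s)
  symm : ∀ ξ η s, μ ξ η s = μ η ξ s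
  pos : ∀ ξ η s, 0 < μ ξ η s
  exists_le : ∃ K, ∀ ξ η s, μ ξ η s ≤ K

/-- A point `((ξ, s), z)` stands for the jump from `ξ` to `ξ + z` at time `s`. -/
abbrev JumpSpace (d : ℕ) : Type := ((Fin d → ℝ) × ℝ) × (Fin d → ℝ)

/-- The rate `μ(ξ, ξ + z, s)` of a jump. -/
def jumpRate (μ : (Fin d → ℝ) → (Fin d → ℝ) → ℝ → ℝ) (p : JumpSpace d) : ℝ :=
  μ p.1.1 (p.1.1 + p.2) p.1.2

/-- The measure `μ(ξ, ξ + z, s) dξ ds κ(dz)` on jumps; the effective matrix is a Gram matrix in its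
`L²` space when `κ = a(z) dz`. -/
def jumpMeasure (κ : Measure (Fin d → ℝ)) (μ : (Fin d → ℝ) → (Fin d → ℝ) → ℝ → ℝ) :
    Measure (JumpSpace d) :=
  ((torusMeasure d).prod κ).withDensity fun p => ENNReal.ofReal (jumpRate μ p)

/-- The total rate `∫ μ(ξ, ξ + z, s) F(ξ, s, z) κ(dz)` of an observable `F` of the jumps leaving
`ξ` at time `s`, where `c = (ξ, s)`. -/
def jumpIntegral (κ : Measure (Fin d → ℝ)) (μ : (Fin d → ℝ) → (Fin d → ℝ) → ℝ → ℝ)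
    (F : JumpSpace d → ℝ) (c : (Fin d → ℝ) × ℝ) : ℝ :=
  ∫ z, jumpRate μ (c, z) * F (c, z) ∂κ

/-- The value of `β` at the starting point of a jump. -/
def atSource (β : (Fin d → ℝ) → ℝ → ℝ) (p : JumpSpace d) : ℝ := β p.1.1 p.1.2

/-- The value of `β` at the end point of a jump. -/
def atTarget (β : (Fin d → ℝ) → ℝ → ℝ) (p : JumpSpace d) : ℝ := β (p.1.1 + p.2) p.1.2

/-- The reversed jump, from `ξ + z` to `ξ`, with the starting point brought back to the cell. -/
def reverseJump (p : JumpSpace d) : JumpSpace d := ((toCell (p.1.1 + p.2), p.1.2), -p.2)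

theorem atSource_comp_reverseJump {β : (Fin d → ℝ) → ℝ → ℝ} (hβ : ∀ s, IsCellPeriodic (β · s)) :
    atSource β ∘ reverseJump = atTarget β :=
  funext fun _ => (hβ _).apply_toCell _

theorem atTarget_comp_reverseJump {β : (Fin d → ℝ) → ℝ → ℝ} (hβ : ∀ s, IsCellPeriodic (β · s)) :
    atTarget β ∘ reverseJump = atSource β :=
  funext fun p => ((hβ _).apply_toCell_add _ _).trans <|
    congrArg (β · p.1.2) (add_neg_cancel_right p.1.1 p.2)

theorem measurePreserving_reverseJump_prod (κ : Measure (Fin d → ℝ)) [SFinite κ]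
    [κ.IsNegInvariant] :
    MeasurePreserving reverseJump ((torusMeasure d).prod κ) ((torusMeasure d).prod κ) := by
  have hskew : MeasurePreserving
      (fun q : (Fin d → ℝ) × ((Fin d → ℝ) × ℝ) => (-q.1, (toCell (q.2.1 + q.1), q.2.2)))
      (κ.prod (torusMeasure d)) (κ.prod (torusMeasure d)) := by
    refine (Measure.measurePreserving_neg κ).skew_product
      (g := fun z (c : (Fin d → ℝ) × ℝ) => (toCell (c.1 + z), c.2)) ?_
      (.of_forall fun z => (measurePreserving_torus_translate z).map_eq)
    exact (measurable_toCell.comp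
      ((measurable_fst.comp measurable_snd).add measurable_fst)).prodMk
      (measurable_snd.comp measurable_snd)
  exact (Measure.measurePreserving_swap.comp hskew).comp Measure.measurePreserving_swap

namespace IsJumpRate

variable {μ : (Fin d → ℝ) → (Fin d → ℝ) → ℝ → ℝ}

theorem periodic_right (hμ : IsJumpRate μ) (ξ : Fin d → ℝ) (s : ℝ) :
    IsCellPeriodic (μ ξ · s) := fun η k =>
  (hμ.symm ..).trans <| (hμ.periodic_left ξ s η k).trans (hμ.symm ..)

theorem measurable_jumpRate (hμ : IsJumpRate μ) : Measurable (jumpRate μ) :=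
  hμ.measurable.comp (by fun_prop : Measurable fun p : JumpSpace d =>
    (p.1.1, p.1.1 + p.2, p.1.2))

theorem jumpRate_pos (hμ : IsJumpRate μ) (p : JumpSpace d) : 0 < jumpRate μ p := hμ.pos _ _ _

theorem jumpRate_comp_reverseJump (hμ : IsJumpRate μ) : jumpRate μ ∘ reverseJump = jumpRate μ := by
  funext p
  calc μ (toCell (p.1.1 + p.2)) (toCell (p.1.1 + p.2) + -p.2) p.1.2
      = μ (p.1.1 + p.2) (p.1.1 + p.2 + -p.2) p.1.2 := by
        rw [(hμ.periodic_left _ _).apply_toCell, (hμ.periodic_right _ _).apply_toCell_add]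
    _ = jumpRate μ p := by rw [add_neg_cancel_right, hμ.symm, jumpRate]

variable {κ : Measure (Fin d → ℝ)}

theorem measurePreserving_reverseJump [SFinite κ] [κ.IsNegInvariant] (hμ : IsJumpRate μ) :
    MeasurePreserving reverseJump (jumpMeasure κ μ) (jumpMeasure κ μ) := by
  have h := measurePreserving_withDensity (measurePreserving_reverseJump_prod κ)
    hμ.measurable_jumpRate.ennreal_ofReal
  have hrate : (fun p => ENNReal.ofReal (jumpRate μ p)) ∘ reverseJump =
      fun p => ENNReal.ofReal (jumpRate μ p) :=
    funext fun p => congrArg ENNReal.ofReal (congrFun hμ.jumpRate_comp_reverseJump p)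
  rwa [hrate] at h

theorem memLp_jumpMeasure (hμ : IsJumpRate μ) {F : JumpSpace d → ℝ} {p : ℝ≥0∞}
    (hF : MemLp F p ((torusMeasure d).prod κ)) : MemLp F p (jumpMeasure κ μ) := by
  obtain ⟨K, hK⟩ := hμ.exists_le
  have hrate (x : JumpSpace d) : ENNReal.ofReal (jumpRate μ x) ≤ ENNReal.ofReal K :=
    ENNReal.ofReal_le_ofReal (hK _ _ _)
  exact memLp_withDensity_of_le_const ENNReal.ofReal_ne_top hrate hF

theorem isFiniteMeasure_jumpMeasure [IsFiniteMeasure κ] (hμ : IsJumpRate μ) :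
    IsFiniteMeasure (jumpMeasure κ μ) :=
  (integrable_const_iff_isFiniteMeasure one_ne_zero).1 <|
    memLp_one_iff_integrable.1 (hμ.memLp_jumpMeasure (memLp_const (1 : ℝ)))

theorem ae_jumpMeasure_iff (hμ : IsJumpRate μ) {q : JumpSpace d → Prop} :
    (∀ᵐ p ∂jumpMeasure κ μ, q p) ↔ ∀ᵐ p ∂(torusMeasure d).prod κ, q p := by
  rw [jumpMeasure, ae_withDensity_iff hμ.measurable_jumpRate.ennreal_ofReal]
  simp only [ne_eq, ENNReal.ofReal_eq_zero, not_le, hμ.jumpRate_pos, true_imp_iff]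

theorem integrable_jumpRate_mul (hμ : IsJumpRate μ) {F : JumpSpace d → ℝ}
    (hF : Integrable F (jumpMeasure κ μ)) :
    Integrable (fun p => jumpRate μ p * F p) ((torusMeasure d).prod κ) := by
  have h := (integrable_withDensity_iff_integrable_smul' hμ.measurable_jumpRate.ennreal_ofReal
    (.of_forall fun _ => ENNReal.ofReal_lt_top)).1 hF
  simpa only [ENNReal.toReal_ofReal (hμ.jumpRate_pos _).le, smul_eq_mul] using h

theorem integrable_jumpIntegral [SFinite κ] (hμ : IsJumpRate μ) {F : JumpSpace d → ℝ}
    (hF : Integrable F (jumpMeasure κ μ)) :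
    Integrable (jumpIntegral κ μ F) (torusMeasure d) :=
  (hμ.integrable_jumpRate_mul hF).integral_prod_left

theorem integral_jumpIntegral [SFinite κ] (hμ : IsJumpRate μ) {F : JumpSpace d → ℝ}
    (hF : Integrable F (jumpMeasure κ μ)) :
    ∫ c, jumpIntegral κ μ F c ∂torusMeasure d = ∫ p, F p ∂jumpMeasure κ μ := by
  rw [jumpMeasure, integral_withDensity_eq_integral_toReal_smul
    hμ.measurable_jumpRate.ennreal_ofReal (.of_forall fun _ => ENNReal.ofReal_lt_top)]
  simp only [ENNReal.toReal_ofReal (hμ.jumpRate_pos _).le, smul_eq_mul]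
  exact (integral_prod _ (hμ.integrable_jumpRate_mul hF)).symm

theorem jumpIntegral_sub_ae [SFinite κ] (hμ : IsJumpRate μ) {F G : JumpSpace d → ℝ}
    (hF : Integrable F (jumpMeasure κ μ)) (hG : Integrable G (jumpMeasure κ μ)) :
    ∀ᵐ c ∂torusMeasure d,
      jumpIntegral κ μ (F - G) c = jumpIntegral κ μ F c - jumpIntegral κ μ G c := by
  filter_upwards [(hμ.integrable_jumpRate_mul hF).prod_right_ae,
    (hμ.integrable_jumpRate_mul hG).prod_right_ae] with c hFc hGc
  simp only [jumpIntegral, Pi.sub_apply, mul_sub]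
  exact integral_sub hFc hGc

end IsJumpRate

end Jumps

section Corrector

variable {d : ℕ}

/-- For almost every `ξ` in the cell, `β(ξ, ·)` is a primitive of `g(ξ, ·)` on `[0, 1]`, and it
takes the same value at both ends: the time-integrated form of `∂_s β = g` with periodicity. -/
def IsPeriodicPrimitive (g : (Fin d → ℝ) × ℝ → ℝ) (β : (Fin d → ℝ) → ℝ → ℝ) : Prop :=
  ∀ᵐ ξ ∂volume.restrict (cube d),
    β ξ 1 = β ξ 0 ∧ ∀ s ∈ Set.Icc (0 : ℝ) 1, β ξ s = β ξ 0 + ∫ τ in (0 : ℝ)..s, g (ξ, τ)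

namespace IsPeriodicPrimitive

variable {β β₁ β₂ : (Fin d → ℝ) → ℝ → ℝ} {g g' g₁ g₂ : (Fin d → ℝ) × ℝ → ℝ}

theorem congr_ae (hβ : IsPeriodicPrimitive g β) (hg : g =ᵐ[torusMeasure d] g') :
    IsPeriodicPrimitive g' β := by
  filter_upwards [hβ, Measure.ae_ae_of_ae_prod hg] with ξ hξ hgξ
  refine ⟨hξ.1, fun s hs => (hξ.2 s hs).trans ?_⟩
  rw [Measure.restrict_congr_set Ioo_ae_eq_Ioc, ae_restrict_iff' measurableSet_Ioc] at hgξ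
  refine congrArg (β ξ 0 + ·) (intervalIntegral.integral_congr_ae ?_)
  filter_upwards [hgξ] with τ hτ hmem
  rw [Set.uIoc_of_le hs.1] at hmem
  exact hτ ⟨hmem.1, hmem.2.trans hs.2⟩

theorem integral_mul_add_mul_eq_zero (hβ₁ : IsPeriodicPrimitive g₁ β₁)
    (hβ₂ : IsPeriodicPrimitive g₂ β₂) (hg₁ : Integrable g₁ (torusMeasure d))
    (hg₂ : Integrable g₂ (torusMeasure d))
    (hint : Integrable (fun c => β₁ c.1 c.2 * g₂ c + β₂ c.1 c.2 * g₁ c) (torusMeasure d)) :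
    ∫ c, (β₁ c.1 c.2 * g₂ c + β₂ c.1 c.2 * g₁ c) ∂torusMeasure d = 0 := by
  rw [torusMeasure, integral_prod _ hint]
  refine integral_eq_zero_of_ae ?_
  filter_upwards [hβ₁, hβ₂, hg₁.prod_right_ae, hg₂.prod_right_ae] with ξ h₁ h₂ hi₁ hi₂
  have hparts := integral_mul_add_mul_eq_sub_of_eq_add_integral
    ((intervalIntegrable_iff_integrableOn_Ioo_of_le zero_le_one).2 hi₁)
    ((intervalIntegrable_iff_integrableOn_Ioo_of_le zero_le_one).2 hi₂)
    (Set.uIcc_of_le (zero_le_one' ℝ) ▸ h₁.2) (Set.uIcc_of_le (zero_le_one' ℝ) ▸ h₂.2)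
  rw [h₁.1, h₂.1, sub_self, intervalIntegral.integral_of_le zero_le_one,
    integral_Ioc_eq_integral_Ioo] at hparts
  exact hparts

end IsPeriodicPrimitive

variable {a : (Fin d → ℝ) → ℝ} {μ : (Fin d → ℝ) → (Fin d → ℝ) → ℝ → ℝ}
  {κ : Measure (Fin d → ℝ)}

theorem IsJumpRate.integral_atSource_mul [SFinite κ] (hμ : IsJumpRate μ)
    {β : (Fin d → ℝ) → ℝ → ℝ} {F : JumpSpace d → ℝ} (hβ : MemLp (atSource β) 2 (jumpMeasure κ μ))
    (hF : MemLp F 2 (jumpMeasure κ μ)) :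
    Integrable (fun c => β c.1 c.2 * jumpIntegral κ μ F c) (torusMeasure d) ∧
      ∫ c, β c.1 c.2 * jumpIntegral κ μ F c ∂torusMeasure d =
        ∫ p, atSource β p * F p ∂jumpMeasure κ μ := by
  have hint : Integrable (fun p => atSource β p * F p) (jumpMeasure κ μ) := hβ.integrable_mul hF
  have hfactor : jumpIntegral κ μ (fun p => atSource β p * F p) =
      fun c => β c.1 c.2 * jumpIntegral κ μ F c := by
    funext c
    simp only [jumpIntegral, atSource, mul_left_comm, integral_const_mul]
  rw [← hfactor]
  exact ⟨hμ.integrable_jumpIntegral hint, hμ.integral_jumpIntegral hint⟩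

theorem IsJumpRate.integral_atSource_mul_add_eq_zero [IsFiniteMeasure κ] (hμ : IsJumpRate μ)
    {β₁ β₂ : (Fin d → ℝ) → ℝ → ℝ} {F₁ F₂ : JumpSpace d → ℝ}
    (hβ₁ : MemLp (atSource β₁) 2 (jumpMeasure κ μ)) (hβ₂ : MemLp (atSource β₂) 2 (jumpMeasure κ μ))
    (hF₁ : MemLp F₁ 2 (jumpMeasure κ μ)) (hF₂ : MemLp F₂ 2 (jumpMeasure κ μ))
    (h₁ : IsPeriodicPrimitive (jumpIntegral κ μ F₁) β₁)
    (h₂ : IsPeriodicPrimitive (jumpIntegral κ μ F₂) β₂) :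
    (∫ p, atSource β₁ p * F₂ p ∂jumpMeasure κ μ) + ∫ p, atSource β₂ p * F₁ p ∂jumpMeasure κ μ =
      0 := by
  have := hμ.isFiniteMeasure_jumpMeasure (κ := κ)
  obtain ⟨hint₁₂, hint₁₂_eq⟩ := hμ.integral_atSource_mul hβ₁ hF₂
  obtain ⟨hint₂₁, hint₂₁_eq⟩ := hμ.integral_atSource_mul hβ₂ hF₁
  rw [← hint₁₂_eq, ← hint₂₁_eq, ← integral_add hint₁₂ hint₂₁]
  exact h₁.integral_mul_add_mul_eq_zero h₂
    (hμ.integrable_jumpIntegral (hF₁.integrable one_le_two))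
    (hμ.integrable_jumpIntegral (hF₂.integrable one_le_two)) (hint₁₂.add hint₂₁)

namespace IsCellSol

variable {θ β : (Fin d → ℝ) → ℝ → ℝ}

theorem isCellPeriodic (hβ : IsCellSol a μ θ β) (s : ℝ) : IsCellPeriodic (β · s) :=
  fun ξ k => hβ.2.1 ξ s k

theorem isPeriodicPrimitive (hβ : IsCellSol a μ θ β) :
    IsPeriodicPrimitive (fun c => Aop a μ c.2 (β · c.2) c.1 + θ c.1 c.2) β := by
  filter_upwards [ae_restrict_of_ae hβ.2.2.2.2] with ξ hξ
  exact ⟨by simpa only [zero_add] using hβ.2.2.1 ξ 0, hξ⟩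

theorem memLp_atSource [IsFiniteMeasure κ] (hβ : IsCellSol a μ θ β) (hμ : IsJumpRate μ) :
    MemLp (atSource β) 2 (jumpMeasure κ μ) := by
  have hL2 : MemLp (fun c : (Fin d → ℝ) × ℝ => β c.1 c.2) 2 (torusMeasure d) := by
    rw [memLp_two_iff_integrable_sq hβ.1.aestronglyMeasurable, torusMeasure, Measure.prod_restrict]
    exact hβ.2.2.2.1
  exact hμ.memLp_jumpMeasure (hL2.comp_fst κ)

theorem memLp_atTarget [IsFiniteMeasure κ] [κ.IsNegInvariant] (hβ : IsCellSol a μ θ β)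
    (hμ : IsJumpRate μ) : MemLp (atTarget β) 2 (jumpMeasure κ μ) := by
  rw [← atSource_comp_reverseJump hβ.isCellPeriodic]
  exact (hβ.memLp_atSource hμ).comp_measurePreserving hμ.measurePreserving_reverseJump

end IsCellSol

/-- The displacement of a jump in direction `j`, corrected by the increment of `β` along it; its
vanishing means that `ξ_j - β` is unchanged by the jump. -/
def correctedJump (j : Fin d) (β : (Fin d → ℝ) → ℝ → ℝ) (p : JumpSpace d) : ℝ :=
  p.2 j - (atTarget β p - atSource β p)

theorem IsJumpKernel.memLp_displacement (ha : IsJumpKernel a) (hμ : IsJumpRate μ) (j : Fin d) :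
    MemLp (fun p : JumpSpace d => p.2 j) 2 (jumpMeasure (kernelMeasure a) μ) :=
  have := ha.isFiniteMeasure_kernelMeasure
  hμ.memLp_jumpMeasure ((ha.memLp_apply j).comp_snd _)

theorem IsCellSol.memLp_correctedJump {θ β : (Fin d → ℝ) → ℝ → ℝ} (hβ : IsCellSol a μ θ β)
    (ha : IsJumpKernel a) (hμ : IsJumpRate μ) (j : Fin d) :
    MemLp (correctedJump j β) 2 (jumpMeasure (kernelMeasure a) μ) :=
  have := ha.isFiniteMeasure_kernelMeasure
  have := ha.isNegInvariant_kernelMeasure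
  (ha.memLp_displacement hμ j).sub ((hβ.memLp_atTarget hμ).sub (hβ.memLp_atSource hμ))

theorem IsJumpKernel.aop_eq_jumpIntegral (ha : IsJumpKernel a) (β : (Fin d → ℝ) → ℝ → ℝ)
    (c : (Fin d → ℝ) × ℝ) :
    Aop a μ c.2 (β · c.2) c.1 =
      jumpIntegral (kernelMeasure a) μ (atTarget β - atSource β) c := by
  simp only [Aop, mul_assoc]
  exact ha.integral_mul_eq_integral_kernelMeasure _ c.1

theorem IsJumpKernel.qfun_eq_neg_jumpIntegral (ha : IsJumpKernel a) (j : Fin d)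
    (c : (Fin d → ℝ) × ℝ) :
    qfun a μ j c.1 c.2 = -jumpIntegral (kernelMeasure a) μ (fun p => p.2 j) c := by
  simp only [qfun, mul_assoc]
  rw [ha.integral_mul_eq_integral_kernelMeasure (fun η => μ c.1 η c.2 * (η j - c.1 j))]
  simp only [jumpIntegral, jumpRate, Pi.add_apply, add_sub_cancel_left]

theorem IsCellSol.isPeriodicPrimitive_correctedJump {j : Fin d} {χ : (Fin d → ℝ) → ℝ → ℝ}
    (hχ : IsCellSol a μ (qfun a μ j) χ) (ha : IsJumpKernel a) (hμ : IsJumpRate μ) :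
    IsPeriodicPrimitive (jumpIntegral (kernelMeasure a) μ (-correctedJump j χ)) χ := by
  have := ha.isFiniteMeasure_kernelMeasure
  have := ha.isNegInvariant_kernelMeasure
  have := hμ.isFiniteMeasure_jumpMeasure (κ := kernelMeasure a)
  have hincr : MemLp (atTarget χ - atSource χ) 2 (jumpMeasure (kernelMeasure a) μ) :=
    (hχ.memLp_atTarget hμ).sub (hχ.memLp_atSource hμ)
  refine hχ.isPeriodicPrimitive.congr_ae ?_
  filter_upwards [hμ.jumpIntegral_sub_ae (hincr.integrable one_le_two)
    ((ha.memLp_displacement hμ j).integrable one_le_two)] with c hc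
  rw [ha.aop_eq_jumpIntegral, ha.qfun_eq_neg_jumpIntegral, ← sub_eq_add_neg, ← hc]
  exact congrArg (jumpIntegral _ μ · c) (funext fun p => (neg_sub _ _).symm)

theorem IsCellSol.integral_flux_eq {θ β : (Fin d → ℝ) → ℝ → ℝ} (hβ : IsCellSol a μ θ β)
    (ha : IsJumpKernel a) (hμ : IsJumpRate μ) (i j : Fin d) :
    (∫ s in Set.Ioo (0 : ℝ) 1, ∫ ξ in cube d, ∫ η, a (ξ - η) * μ ξ η s *
        ((1 / 2) * (η i - ξ i) * (η j - ξ j) - (η i - ξ i) * β η s)) =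
      ∫ p, (1 / 2 * (p.2 i * p.2 j) - p.2 i * atTarget β p) ∂jumpMeasure (kernelMeasure a) μ := by
  have := ha.isFiniteMeasure_kernelMeasure
  have := ha.isNegInvariant_kernelMeasure
  have hflux : Integrable (fun p : JumpSpace d => 1 / 2 * (p.2 i * p.2 j) - p.2 i * atTarget β p)
      (jumpMeasure (kernelMeasure a) μ) :=
    (((ha.memLp_displacement hμ i).integrable_mul (ha.memLp_displacement hμ j)).const_mul _).sub
      ((ha.memLp_displacement hμ i).integrable_mul (hβ.memLp_atTarget hμ))
  rw [← hμ.integral_jumpIntegral hflux, torusMeasure,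
    integral_prod_symm _ (hμ.integrable_jumpIntegral hflux)]
  refine integral_congr_ae (.of_forall fun s => integral_congr_ae (.of_forall fun ξ => ?_))
  simp only [mul_assoc]
  rw [ha.integral_mul_eq_integral_kernelMeasure fun η => μ ξ η s *
    (1 / 2 * ((η i - ξ i) * (η j - ξ j)) - (η i - ξ i) * β η s)]
  simp only [jumpIntegral, jumpRate, atTarget, Pi.add_apply, add_sub_cancel_left]

theorem integral_symm_flux_eq_integral_correctedJump_mul {i j : Fin d}
    {χ₁ χ₂ : (Fin d → ℝ) → ℝ → ℝ} (ha : IsJumpKernel a) (hμ : IsJumpRate μ)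
    (hχ₁ : IsCellSol a μ (qfun a μ i) χ₁) (hχ₂ : IsCellSol a μ (qfun a μ j) χ₂) :
    (∫ p, (1 / 2 * (p.2 i * p.2 j) - p.2 i * atTarget χ₂ p) ∂jumpMeasure (kernelMeasure a) μ) +
        ∫ p, (1 / 2 * (p.2 j * p.2 i) - p.2 j * atTarget χ₁ p) ∂jumpMeasure (kernelMeasure a) μ =
      ∫ p, correctedJump i χ₁ p * correctedJump j χ₂ p ∂jumpMeasure (kernelMeasure a) μ := by
  have := ha.isFiniteMeasure_kernelMeasure
  have := ha.isNegInvariant_kernelMeasure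
  have hsource₁ := hχ₁.memLp_atSource (κ := kernelMeasure a) hμ
  have hsource₂ := hχ₂.memLp_atSource (κ := kernelMeasure a) hμ
  have horth := hμ.integral_atSource_mul_add_eq_zero hsource₁ hsource₂
    (hχ₁.memLp_correctedJump ha hμ i).neg (hχ₂.memLp_correctedJump ha hμ j).neg
    (hχ₁.isPeriodicPrimitive_correctedJump ha hμ) (hχ₂.isPeriodicPrimitive_correctedJump ha hμ)
  simp only [Pi.neg_apply, mul_neg, integral_neg, ← neg_add, neg_eq_zero] at horth
  have htarget₁ := atSource_comp_reverseJump hχ₁.isCellPeriodic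
  have htarget₂ := atSource_comp_reverseJump hχ₂.isCellPeriodic
  have hflux := integral_symm_flux_eq_integral_mul hμ.measurePreserving_reverseJump
    (ha.memLp_displacement hμ i) (ha.memLp_displacement hμ j) hsource₁ hsource₂ rfl rfl
    (by rw [htarget₁, atTarget_comp_reverseJump hχ₁.isCellPeriodic])
  simp only [← Function.comp_apply (f := atSource _) (g := reverseJump), htarget₁, htarget₂]
    at hflux
  exact hflux horth

theorem eq_zero_of_ae_sum_correctedJump_eq_zero (ha : IsJumpKernel a) (hμ : IsJumpRate μ)
    {χ : Fin d → (Fin d → ℝ) → ℝ → ℝ} (hχ : ∀ j s, IsCellPeriodic (χ j · s)) {ζ : Fin d → ℝ}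
    (h : ∀ᵐ p ∂jumpMeasure (kernelMeasure a) μ, ∑ j, ζ j * correctedJump j (χ j) p = 0) :
    ζ = 0 := by
  have := ha.isFiniteMeasure_kernelMeasure
  have := ha.neZero_kernelMeasure
  have hf (s : ℝ) : IsCellPeriodic fun ξ => ∑ j, ζ j * χ j ξ s := fun ξ k =>
    Finset.sum_congr rfl fun j _ => congrArg (ζ j * ·) (hχ j s ξ k)
  have hℓ : Fintype.linearCombination ℝ ζ = 0 := by
    refine eq_zero_of_ae_increment_eq (κ := kernelMeasure a)
      (withDensity_absolutelyContinuous _ _) hf ((hμ.ae_jumpMeasure_iff.1 h).mono fun p hp => ?_)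
    simp only [correctedJump, atSource, atTarget, mul_sub, Finset.sum_sub_distrib,
      sub_eq_zero] at hp
    simpa only [AddMonoidHom.coe_coe, Fintype.linearCombination_apply, smul_eq_mul, mul_comm]
      using hp.symm
  funext j
  simpa using LinearMap.congr_fun hℓ (Pi.single j 1)

end Corrector

theorem stmt15_general {d : ℕ} {a : (Fin d → ℝ) → ℝ} {μ : (Fin d → ℝ) → (Fin d → ℝ) → ℝ → ℝ}
    (ha : IsJumpKernel a) (hμ : IsJumpRate μ)
    {χ : Fin d → (Fin d → ℝ) → ℝ → ℝ} (hχ : ∀ j, IsCellSol a μ (qfun a μ j) (χ j))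
    {ahat : Fin d → Fin d → ℝ}
    (hahat : ∀ i j, ahat i j =
      ∫ s in Set.Ioo (0 : ℝ) 1, ∫ ξ in cube d, ∫ η,
        a (ξ - η) * μ ξ η s *
          ((1 / 2) * (η i - ξ i) * (η j - ξ j) - (η i - ξ i) * χ j η s))
    {aeff : Fin d → Fin d → ℝ} (haeff : ∀ i j, aeff i j = (1 / 2) * (ahat i j + ahat j i)) :
    ∃ c : ℝ, 0 < c ∧ ∀ ζ : Fin d → ℝ,
      c * (∑ i, ζ i ^ 2) ≤ ∑ i, (∑ j, aeff i j * ζ j) * ζ i := by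
  have hgram (i j : Fin d) : aeff i j = 1 / 2 *
      ∫ p, correctedJump i (χ i) p * correctedJump j (χ j) p ∂jumpMeasure (kernelMeasure a) μ := by
    rw [haeff, hahat, hahat, (hχ j).integral_flux_eq ha hμ, (hχ i).integral_flux_eq ha hμ,
      integral_symm_flux_eq_integral_correctedJump_mul ha hμ (hχ i) (hχ j)]
  obtain ⟨c, hc, hle⟩ := exists_pos_mul_sum_sq_le_integral_gram
    (fun j => (hχ j).memLp_correctedJump ha hμ j)
    fun ζ => eq_zero_of_ae_sum_correctedJump_eq_zero ha hμ fun j => (hχ j).isCellPeriodic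
  refine ⟨1 / 2 * c, by positivity, fun ζ => ?_⟩
  simp only [hgram, mul_assoc, ← Finset.mul_sum]
  simpa only [mul_assoc] using mul_le_mul_of_nonneg_left (hle ζ) one_half_pos.le

/-- The effective matrix `a^eff` is positive definite: there exists `c > 0` with
`(a^eff ζ)·ζ ≥ c |ζ|²` for all `ζ ∈ ℝ^d`. -/
theorem stmt15 {d : ℕ} (hd : 1 ≤ d)
    (a : (Fin d → ℝ) → ℝ) (μ : (Fin d → ℝ) → (Fin d → ℝ) → ℝ → ℝ) (μm μp : ℝ)
    (hameas : Measurable a) (hanonneg : ∀ z, 0 ≤ a z)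
    (haint : Integrable a) (hamass : ∫ z, a z = 1)
    (hamom : Integrable (fun z => ‖z‖ ^ 2 * a z))
    (hasymm : ∀ z, a (-z) = a z)
    (hμmeas : Measurable fun p : (Fin d → ℝ) × (Fin d → ℝ) × ℝ => μ p.1 p.2.1 p.2.2)
    (hμper₁ : ∀ ξ η s, ∀ k : Fin d → ℤ, μ (ξ + fun i => (k i : ℝ)) η s = μ ξ η s)
    (hμper₂ : ∀ ξ η s, ∀ k : Fin d → ℤ, μ ξ (η + fun i => (k i : ℝ)) s = μ ξ η s)
    (hμper₃ : ∀ ξ η s, μ ξ η (s + 1) = μ ξ η s)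
    (hμsymm : ∀ ξ η s, μ ξ η s = μ η ξ s)
    (hμm : 0 < μm) (hμlb : ∀ ξ η s, μm ≤ μ ξ η s) (hμub : ∀ ξ η s, μ ξ η s ≤ μp)
    (χ : Fin d → (Fin d → ℝ) → ℝ → ℝ)
    (hχ : ∀ j : Fin d, IsCellSol a μ (qfun a μ j) (χ j))
    (hχ0 : ∀ j : Fin d,
      (∫ p in cube d ×ˢ Set.Ioo (0 : ℝ) 1, χ j (Prod.fst p) (Prod.snd p)) = 0)
    (ahat : Fin d → Fin d → ℝ)
    (hahat : ∀ i j, ahat i j =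
      ∫ s in Set.Ioo (0 : ℝ) 1, ∫ ξ in cube d, ∫ η,
        a (ξ - η) * μ ξ η s *
          ((1 / 2) * (η i - ξ i) * (η j - ξ j) - (η i - ξ i) * χ j η s))
    (aeff : Fin d → Fin d → ℝ)
    (haeff : ∀ i j, aeff i j = (1 / 2) * (ahat i j + ahat j i)) :
    ∃ c : ℝ, 0 < c ∧ ∀ ζ : Fin d → ℝ,
      c * (∑ i, ζ i ^ 2) ≤ ∑ i, (∑ j, aeff i j * ζ j) * ζ i := by
  have ha : IsJumpKernel a :=
    ⟨hameas, hanonneg, haint, hamass.trans_ne one_ne_zero, hamom, hasymm⟩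
  exact stmt15_general ha ⟨hμmeas, fun η s ξ k => hμper₁ ξ η s k, hμsymm,
    fun ξ η s => hμm.trans_le (hμlb ξ η s), μp, hμub⟩ hχ hahat haeff
end
end
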